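/- (From the proof of Proposition 4.) Suppose Assumptions 1, 2 and 3 hold and X and Y are conditionally independent given Z. Let J ≥ 1, fix locations (t_j)_{j=1}^J in 𝒳̈ × 𝒴, let (r_n) satisfy n^{(β+γ)/(2β)} = o(r_n), and set every RLS regularization parameter to λ_{r_n} = r_n^{−1/(1+γ)}. Then the empirical covariance matrix Σ_{n,r_n} = (1/n)Σ_{i=1}^n ũ_{i,r_n} ũ_{i,r_n}ᵀ converges in probability, as n → ∞, to Σ = E[u_1 u_1ᵀ]. -/

import Mathlib

open MeasureTheory ProbabilityTheory Filter Topology Asymptotics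
open scoped RealInnerProductSpace

noncomputable section

namespace CIPaper

/-- A positive definite kernel. -/
def PosDefKernel {D : Type*} (k : D → D → ℝ) : Prop :=
  ∀ (n : ℕ) (x : Fin n → D) (c : Fin n → ℝ),
    0 ≤ ∑ i : Fin n, ∑ j : Fin n, c i * c j * k (x i) (x j)

/-- The mean embedding of `ν` with respect to the kernel `k`. -/
def meanEmbed {D : Type*} [MeasurableSpace D] (k : D → D → ℝ) (ν : Measure D) (t : D) : ℝ :=
  ∫ x, k x t ∂ν

/-- A kernel is characteristic if the mean embedding is injective on probability measures. -/
def Characteristic {D : Type*} [MeasurableSpace D] (k : D → D → ℝ) : Prop :=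
  ∀ P Q : Measure D, IsProbabilityMeasure P → IsProbabilityMeasure Q →
    (∀ t, meanEmbed k P t = meanEmbed k Q t) → P = Q

def BoundedKernel {D : Type*} (k : D → D → ℝ) : Prop := ∃ C, ∀ x y, |k x y| ≤ C

/-- Assumption 1 of the paper, for the tensor product kernel built from `kX` and `kY` :
the tensor kernel is positive definite, characteristic, bounded, continuous and analytic. -/
structure Assumption1 {DX DY : Type*} [MeasurableSpace DX] [MeasurableSpace DY]
    [NormedAddCommGroup DX] [NormedSpace ℝ DX] [NormedAddCommGroup DY] [NormedSpace ℝ DY]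
    (kX : DX → DX → ℝ) (kY : DY → DY → ℝ) : Prop where
  posdef : PosDefKernel fun p q : DX × DY => kX p.1 q.1 * kY p.2 q.2
  charac : Characteristic fun p q : DX × DY => kX p.1 q.1 * kY p.2 q.2
  bounded : BoundedKernel fun p q : DX × DY => kX p.1 q.1 * kY p.2 q.2
  continuous : Continuous fun pq : (DX × DY) × (DX × DY) => kX pq.1.1 pq.2.1 * kY pq.1.2 pq.2.2
  analytic : ∀ p : DX × DY, AnalyticOnNhd ℝ (fun q : DX × DY => kX p.1 q.1 * kY p.2 q.2) Set.univ

/-- The random metric `d_{p,J}` between two measures, with locations `t`. -/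
def dpJ {D : Type*} [MeasurableSpace D] (k : D → D → ℝ) (p : ℕ) {J : ℕ}
    (t : Fin J → D) (P Q : Measure D) : ℝ :=
  ((J : ℝ)⁻¹ * ∑ j : Fin J, |meanEmbed k P (t j) - meanEmbed k Q (t j)| ^ p) ^ ((p : ℝ)⁻¹)

/-- `P` is the measure `P_{Ẍ⊗Y|Z}` of the paper : a Borel probability measure with
`P(A×B) = E[E[1_A(Ẍ)|Z]·E[1_B(Y)|Z]]` for all measurable `A`, `B`. -/
def IsCondProdMeasure {Ω : Type*} [MeasurableSpace Ω] (μ : Measure Ω)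
    {DX DZ DY : Type*} [MeasurableSpace DX] [MeasurableSpace DZ] [MeasurableSpace DY]
    (X : Ω → DX) (Z : Ω → DZ) (Y : Ω → DY) (P : Measure ((DX × DZ) × DY)) : Prop :=
  IsProbabilityMeasure P ∧
    ∀ (A : Set (DX × DZ)) (B : Set DY), MeasurableSet A → MeasurableSet B →
      (P (A ×ˢ B)).toReal =
        ∫ ω, ((μ[fun ω' => A.indicator (fun _ => (1 : ℝ)) (X ω', Z ω') |
                MeasurableSpace.comap Z inferInstance]) ω)
            * ((μ[fun ω' => B.indicator (fun _ => (1 : ℝ)) (Y ω') |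
                MeasurableSpace.comap Z inferInstance]) ω) ∂μ

/-- The witness function `Δ`. -/
def witness {Ω : Type*} [MeasurableSpace Ω] (μ : Measure Ω)
    {DX DZ DY : Type*} [MeasurableSpace DZ]
    (kX : DX × DZ → DX × DZ → ℝ) (kY : DY → DY → ℝ)
    (X : Ω → DX) (Z : Ω → DZ) (Y : Ω → DY) (t1 : DX × DZ) (t2 : DY) : ℝ :=
  ∫ ω, (kX t1 (X ω, Z ω) -
          (μ[fun ω' => kX t1 (X ω', Z ω') | MeasurableSpace.comap Z inferInstance]) ω)
      * (kY t2 (Y ω) -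
          (μ[fun ω' => kY t2 (Y ω') | MeasurableSpace.comap Z inferInstance]) ω) ∂μ

/-- Cramér–Wold characterization: `ν` is the centered Gaussian measure on `ℝ^J` with
covariance matrix `S`. -/
def IsCenteredGaussian {J : ℕ} (S : Matrix (Fin J) (Fin J) ℝ) (ν : Measure (Fin J → ℝ)) : Prop :=
  IsProbabilityMeasure ν ∧
    ∀ a : Fin J → ℝ,
      ν.map (fun v => ∑ j, a j * v j) =
        gaussianReal 0 (Real.toNNReal (∑ i, ∑ j, a i * S i j * a j))

/-- Convergence in distribution (weak convergence of the image laws). -/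
def TendstoInDistribution {Ω : Type*} [MeasurableSpace Ω] (μ : Measure Ω) {E : Type*}
    [TopologicalSpace E] [MeasurableSpace E] (W : ℕ → Ω → E) (ν : Measure E) : Prop :=
  ∀ f : BoundedContinuousFunction E ℝ,
    Tendsto (fun n : ℕ => ∫ ω, f (W n ω) ∂μ) atTop (𝓝 (∫ x, f x ∂ν))

/-- The one-sample statistic `u_i(j)` of the paper (oracle version), where `e1`, `e2` are
the conditional mean functions. -/
def uStat {Ω DX DZ DY : Type*} (kX : DX × DZ → DX × DZ → ℝ) (kY : DY → DY → ℝ)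
    (e1 : DX × DZ → DZ → ℝ) (e2 : DY → DZ → ℝ)
    (xS : ℕ → Ω → DX) (zS : ℕ → Ω → DZ) (yS : ℕ → Ω → DY)
    {J : ℕ} (t : Fin J → (DX × DZ) × DY) (i : ℕ) (j : Fin J) (ω : Ω) : ℝ :=
  (kX (t j).1 (xS i ω, zS i ω) - e1 (t j).1 (zS i ω)) *
    (kY (t j).2 (yS i ω) - e2 (t j).2 (zS i ω))

/-- `S_n`, the empirical mean of the `u_i`. -/
def SStat {Ω DX DZ DY : Type*} (kX : DX × DZ → DX × DZ → ℝ) (kY : DY → DY → ℝ)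
    (e1 : DX × DZ → DZ → ℝ) (e2 : DY → DZ → ℝ)
    (xS : ℕ → Ω → DX) (zS : ℕ → Ω → DZ) (yS : ℕ → Ω → DY)
    {J : ℕ} (t : Fin J → (DX × DZ) × DY) (n : ℕ) (ω : Ω) : Fin J → ℝ :=
  fun j => (n : ℝ)⁻¹ * ∑ i ∈ Finset.range n, uStat kX kY e1 e2 xS zS yS t i j ω

/-- The covariance matrix `Σ = E[u₁ u₁ᵀ]`. -/
def covMat {Ω DX DZ DY : Type*} [MeasurableSpace Ω] (μ : Measure Ω)
    (kX : DX × DZ → DX × DZ → ℝ) (kY : DY → DY → ℝ)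
    (e1 : DX × DZ → DZ → ℝ) (e2 : DY → DZ → ℝ)
    (xS : ℕ → Ω → DX) (zS : ℕ → Ω → DZ) (yS : ℕ → Ω → DY)
    {J : ℕ} (t : Fin J → (DX × DZ) × DY) : Matrix (Fin J) (Fin J) ℝ :=
  Matrix.of fun j j' =>
    ∫ ω, uStat kX kY e1 e2 xS zS yS t 0 j ω * uStat kX kY e1 e2 xS zS yS t 0 j' ω ∂μ

/-- The empirical covariance matrix `Σ̂_n` of the oracle `u_i`. -/
def covHat {Ω DX DZ DY : Type*} (kX : DX × DZ → DX × DZ → ℝ) (kY : DY → DY → ℝ)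
    (e1 : DX × DZ → DZ → ℝ) (e2 : DY → DZ → ℝ)
    (xS : ℕ → Ω → DX) (zS : ℕ → Ω → DZ) (yS : ℕ → Ω → DY)
    {J : ℕ} (t : Fin J → (DX × DZ) × DY) (n : ℕ) (ω : Ω) : Matrix (Fin J) (Fin J) ℝ :=
  Matrix.of fun j j' => (n : ℝ)⁻¹ * ∑ i ∈ Finset.range n,
    uStat kX kY e1 e2 xS zS yS t i j ω * uStat kX kY e1 e2 xS zS yS t i j' ω

/-- The regularized least squares estimator built from the first `r` samples `zs` with
targets `target`, kernel `kZ` and regularization parameter `lam`. -/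
def rls {DZ : Type*} (kZ : DZ → DZ → ℝ) (zs : ℕ → DZ) (target : ℕ → ℝ)
    (r : ℕ) (lam : ℝ) (z : DZ) : ℝ :=
  ∑ i : Fin r,
    (((Matrix.of fun i l : Fin r => kZ (zs i) (zs l)) +
        ((r : ℝ) * lam) • (1 : Matrix (Fin r) (Fin r) ℝ))⁻¹.mulVec
      fun i : Fin r => target i) i * kZ (zs i) z

/-- The statistic `ũ_{i,r}(j)` built from the RLS estimators. -/
def uTildeStat {Ω DX DZ DY : Type*} (kX : DX × DZ → DX × DZ → ℝ) (kY : DY → DY → ℝ)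
    {J : ℕ} (kZ1 kZ2 : Fin J → DZ → DZ → ℝ)
    (xS : ℕ → Ω → DX) (zS : ℕ → Ω → DZ) (yS : ℕ → Ω → DY)
    (t : Fin J → (DX × DZ) × DY) (r : ℕ) (lam : ℝ) (i : ℕ) (j : Fin J) (ω : Ω) : ℝ :=
  (kX (t j).1 (xS i ω, zS i ω) -
      rls (kZ1 j) (fun l => zS l ω) (fun l => kX (t j).1 (xS l ω, zS l ω)) r lam (zS i ω)) *
    (kY (t j).2 (yS i ω) -
      rls (kZ2 j) (fun l => zS l ω) (fun l => kY (t j).2 (yS l ω)) r lam (zS i ω))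

/-- `S̃_{n,r}`. -/
def STilde {Ω DX DZ DY : Type*} (kX : DX × DZ → DX × DZ → ℝ) (kY : DY → DY → ℝ)
    {J : ℕ} (kZ1 kZ2 : Fin J → DZ → DZ → ℝ)
    (xS : ℕ → Ω → DX) (zS : ℕ → Ω → DZ) (yS : ℕ → Ω → DY)
    (t : Fin J → (DX × DZ) × DY) (n r : ℕ) (lam : ℝ) (ω : Ω) : Fin J → ℝ :=
  fun j => (n : ℝ)⁻¹ * ∑ i ∈ Finset.range n,
    uTildeStat kX kY kZ1 kZ2 xS zS yS t r lam i j ω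

/-- `Σ_{n,r}`, the empirical covariance matrix of the `ũ_{i,r}`. -/
def covTilde {Ω DX DZ DY : Type*} (kX : DX × DZ → DX × DZ → ℝ) (kY : DY → DY → ℝ)
    {J : ℕ} (kZ1 kZ2 : Fin J → DZ → DZ → ℝ)
    (xS : ℕ → Ω → DX) (zS : ℕ → Ω → DZ) (yS : ℕ → Ω → DY)
    (t : Fin J → (DX × DZ) × DY) (n r : ℕ) (lam : ℝ) (ω : Ω) : Matrix (Fin J) (Fin J) ℝ :=
  Matrix.of fun j j' => (n : ℝ)⁻¹ * ∑ i ∈ Finset.range n,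
    uTildeStat kX kY kZ1 kZ2 xS zS yS t r lam i j ω *
      uTildeStat kX kY kZ1 kZ2 xS zS yS t r lam i j' ω

open scoped Classical in
/-- The inverse square root `M^{-1/2}` of a positive semidefinite matrix. -/
def invSqrtMat {J : ℕ} (M : Matrix (Fin J) (Fin J) ℝ) : Matrix (Fin J) (Fin J) ℝ :=
  if h : M.PosSemidef then
    ((h.1.eigenvectorUnitary : Matrix (Fin J) (Fin J) ℝ) *
      Matrix.diagonal (fun i => Real.sqrt (h.1.eigenvalues i)) *
      (star h.1.eigenvectorUnitary : Matrix (Fin J) (Fin J) ℝ))⁻¹ else 0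

/-- The chi-square distribution with `J` degrees of freedom, realized as the law of the sum of
squares of `J` independent standard Gaussians. -/
def chiSq (J : ℕ) : Measure ℝ :=
  (Measure.pi fun _ : Fin J => gaussianReal 0 1).map fun v => ∑ j, v j ^ 2

/-- Assumption 2 of the paper for the operator `L` on `L²(P_Z)` :
`Tr((L + λ)⁻¹ L) ≤ Q λ^{-γ}`, the trace of the positive operator being computed in any
Hilbert basis. -/
def TraceAssumption {DZ : Type*} [MeasurableSpace DZ] (PZ : Measure DZ)
    (L : Lp ℝ 2 PZ →L[ℝ] Lp ℝ 2 PZ) (Q γ : ℝ) : Prop :=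
  ∀ lam : ℝ, 0 < lam → ∀ (ι : Type) (e : HilbertBasis ι ℝ (Lp ℝ 2 PZ)),
    ∑' i, ⟪(Ring.inverse (L + lam • (1 : Lp ℝ 2 PZ →L[ℝ] Lp ℝ 2 PZ)) * L) (e i), e i⟫ ≤
      Q * lam ^ (-γ)

/-- `P = L^s` : `P` is self-adjoint and acts as `c ^ s` on every eigenvector of `L`
(this determines the fractional power, via functional calculus, of a positive self-adjoint
compact operator). -/
def IsFracPower {H : Type*} [NormedAddCommGroup H] [InnerProductSpace ℝ H]
    (L : H →L[ℝ] H) (s : ℝ) (P : H →L[ℝ] H) : Prop :=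
  (∀ v w : H, ⟪P v, w⟫ = ⟪v, P w⟫) ∧
    ∀ (c : ℝ) (v : H), L v = c • v → P v = c ^ s • v

end CIPaper

open CIPaper

namespace CIProof

section Det
variable {H : Type*} [NormedAddCommGroup H] [InnerProductSpace ℝ H] {r : ℕ}

/-- Gram matrix. -/
def gram (Φ : Fin r → H) : Matrix (Fin r) (Fin r) ℝ := Matrix.of fun i l => ⟪Φ i, Φ l⟫

/-- Regularized inverse. -/
def rinv (Φ : Fin r → H) (c : ℝ) : Matrix (Fin r) (Fin r) ℝ :=
  (gram Φ + c • (1 : Matrix (Fin r) (Fin r) ℝ))⁻¹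

theorem gram_mulVec (Φ : Fin r → H) (x : Fin r → ℝ) (i : Fin r) :
    (gram Φ).mulVec x i = ⟪Φ i, ∑ l, x l • Φ l⟫ := by
  simp [gram, Matrix.mulVec, dotProduct, inner_sum, inner_smul_right, mul_comm]

theorem gram_quad (Φ : Fin r → H) (x : Fin r → ℝ) :
    x ⬝ᵥ (gram Φ).mulVec x = ‖∑ l, x l • Φ l‖ ^ 2 := by
  rw [← real_inner_self_eq_norm_sq, sum_inner]
  simp only [dotProduct, gram_mulVec, real_inner_smul_left]

theorem reg_posDef (Φ : Fin r → H) {c : ℝ} (hc : 0 < c) :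
    (gram Φ + c • (1 : Matrix (Fin r) (Fin r) ℝ)).PosDef := by
  apply Matrix.PosDef.of_dotProduct_mulVec_pos
  · ext i j
    simp [gram, Matrix.one_apply, real_inner_comm, eq_comm]
  · intro x hx
    have : 0 < x ⬝ᵥ x := by
      simpa using (Matrix.dotProduct_star_self_pos_iff (v := x)).2 hx
    rw [Matrix.add_mulVec, dotProduct_add, Matrix.smul_mulVec, Matrix.one_mulVec]
    simp only [star_trivial, dotProduct_smul, smul_eq_mul]
    rw [gram_quad]
    positivity

theorem reg_mul (Φ : Fin r → H) {c : ℝ} (hc : 0 < c) :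
    (gram Φ + c • (1 : Matrix (Fin r) (Fin r) ℝ)) * rinv Φ c = 1 :=
  Matrix.mul_nonsing_inv _ ((reg_posDef Φ hc).isUnit.map Matrix.detMonoidHom)

/-- normal equations -/
theorem normal_eq (Φ : Fin r → H) {c : ℝ} (hc : 0 < c) (y : Fin r → ℝ) (i : Fin r) :
    ⟪Φ i, ∑ l, (rinv Φ c).mulVec y l • Φ l⟫ + c * (rinv Φ c).mulVec y i = y i := by
  have h := congrArg (fun M => Matrix.mulVec M y i) (reg_mul Φ hc)
  simp only [← Matrix.mulVec_mulVec, Matrix.one_mulVec, Matrix.add_mulVec, Matrix.smul_mulVec,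
    Pi.add_apply, Pi.smul_apply, smul_eq_mul, gram_mulVec] at h
  exact h

theorem energy_eq (Φ : Fin r → H) {c : ℝ} (hc : 0 < c) (y : Fin r → ℝ) :
    c * ‖∑ l, (rinv Φ c).mulVec y l • Φ l‖ ^ 2
      + ∑ i, ⟪Φ i, ∑ l, (rinv Φ c).mulVec y l • Φ l⟫ ^ 2
      = y ⬝ᵥ (gram Φ * rinv Φ c).mulVec y := by
  rw [← Matrix.mulVec_mulVec]
  set x := (rinv Φ c).mulVec y with hx
  set q := ∑ l, x l • Φ l with hq
  have h1 : y ⬝ᵥ (gram Φ).mulVec x = ∑ i, (⟪Φ i, q⟫ + c * x i) * ⟪Φ i, q⟫ := by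
    simp only [dotProduct, gram_mulVec]
    refine Finset.sum_congr rfl fun i _ => ?_
    rw [← normal_eq Φ hc y i]
  have h2 : ‖q‖ ^ 2 = ∑ i, x i * ⟪Φ i, q⟫ := by
    rw [← real_inner_self_eq_norm_sq]
    conv_lhs => rw [hq, sum_inner]
    simp only [real_inner_smul_left, ← hq]
  rw [h1, h2, Finset.mul_sum, ← Finset.sum_add_distrib]
  exact Finset.sum_congr rfl fun i _ => by ring

theorem bias_bound (Φ : Fin r → H) {c : ℝ} (hc : 0 < c) (u : H) :
    ‖u - ∑ l, (rinv Φ c).mulVec (fun i => ⟪u, Φ i⟫) l • Φ l‖ ^ 2 ≤ ‖u‖ ^ 2 ∧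
    ∑ i, ⟪u - ∑ l, (rinv Φ c).mulVec (fun i => ⟪u, Φ i⟫) l • Φ l, Φ i⟫ ^ 2 ≤ c * ‖u‖ ^ 2 := by
  set y : Fin r → ℝ := fun i => ⟪u, Φ i⟫ with hy
  set x := (rinv Φ c).mulVec y with hx
  set q := ∑ l, x l • Φ l with hq
  set p := u - q with hp
  have hne : ∀ i, c * x i = ⟪p, Φ i⟫ := fun i => by
    have := normal_eq Φ hc y i
    rw [← hx, ← hq] at this
    rw [hp, inner_sub_left, real_inner_comm (Φ i) q]
    linarith
  have h1 : c * ⟪q, p⟫ = ∑ i, ⟪p, Φ i⟫ ^ 2 := by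
    rw [hq, sum_inner, Finset.mul_sum]
    refine Finset.sum_congr rfl fun i _ => ?_
    rw [real_inner_smul_left, ← mul_assoc, hne, real_inner_comm, sq]
  have h2 : ⟪q, p⟫ = ⟪u, p⟫ - ‖p‖ ^ 2 := by
    rw [← real_inner_self_eq_norm_sq, ← inner_sub_left, hp]; congr 1; abel
  have h3 : 0 ≤ ∑ i, ⟪p, Φ i⟫ ^ 2 := Finset.sum_nonneg fun i _ => sq_nonneg _
  have h4 : 0 ≤ ⟪q, p⟫ := by
    by_contra hcon
    push Not at hcon
    nlinarith
  have h5 := real_inner_le_norm u p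
  have h6 : ‖p‖ ^ 2 ≤ ‖u‖ * ‖p‖ := by linarith
  have h7 : ‖p‖ ≤ ‖u‖ := by
    rcases (norm_nonneg p).eq_or_lt with h | h
    · rw [← h]; exact norm_nonneg _
    · nlinarith
  refine ⟨by gcongr, ?_⟩
  rw [← h1, h2]
  gcongr
  nlinarith [norm_nonneg p, norm_nonneg u]

theorem rinv_norm (Φ : Fin r → H) {c : ℝ} (hc : 0 < c) (y : Fin r → ℝ) :
    c ^ 2 * ∑ i, (rinv Φ c).mulVec y i ^ 2 ≤ ∑ i, y i ^ 2 := by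
  set x := (rinv Φ c).mulVec y with hx
  set q := ∑ l, x l • Φ l with hq
  have h : ∀ i, y i ^ 2 = ⟪Φ i, q⟫ ^ 2 + 2 * c * (x i * ⟪Φ i, q⟫) + c ^ 2 * x i ^ 2 := fun i => by
    rw [← normal_eq Φ hc y i, ← hx, ← hq]; ring
  have h2 : ‖q‖ ^ 2 = ∑ i, x i * ⟪Φ i, q⟫ := by
    rw [← real_inner_self_eq_norm_sq]
    conv_lhs => rw [hq, sum_inner]
    simp only [real_inner_smul_left, ← hq]
  simp_rw [h, Finset.sum_add_distrib, ← Finset.mul_sum, ← h2]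
  have : 0 ≤ ∑ i, ⟪Φ i, q⟫ ^ 2 := Finset.sum_nonneg fun i _ => sq_nonneg _
  nlinarith [sq_nonneg ‖q‖]

theorem rinv_entry (Φ : Fin r → H) {c : ℝ} (hc : 0 < c) (i j : Fin r) :
    |rinv Φ c i j| ≤ 1 / c := by
  have h := rinv_norm Φ hc (Pi.single j 1)
  have h1 : ∑ i, (Pi.single j (1:ℝ) : Fin r → ℝ) i ^ 2 = 1 := by
    simp [Pi.single_apply]
  rw [h1] at h
  have h2 : (rinv Φ c i j) ^ 2 ≤ ∑ i, (rinv Φ c).mulVec (Pi.single j 1) i ^ 2 := by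
    have := Finset.single_le_sum (f := fun i => (rinv Φ c).mulVec (Pi.single j 1) i ^ 2)
      (fun i _ => sq_nonneg _) (Finset.mem_univ i)
    simpa using this
  have h3 : (c * rinv Φ c i j) ^ 2 ≤ 1 := by
    rw [mul_pow]; exact (mul_le_mul_of_nonneg_left h2 (sq_nonneg c)).trans h
  have h4 := (sq_le_one_iff_abs_le_one _).1 h3
  rw [abs_mul, abs_of_pos hc] at h4
  rw [le_div_iff₀ hc, mul_comm]
  exact h4

theorem gram_rinv_eq (Φ : Fin r → H) {c : ℝ} (hc : 0 < c) :
    gram Φ * rinv Φ c = 1 - c • rinv Φ c := by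
  have h := reg_mul Φ hc
  rw [Matrix.add_mul, Matrix.smul_mul, Matrix.one_mul] at h
  rw [← h]; abel

theorem gram_rinv_entry (Φ : Fin r → H) {c : ℝ} (hc : 0 < c) (i j : Fin r) :
    |(gram Φ * rinv Φ c) i j| ≤ 2 := by
  rw [gram_rinv_eq Φ hc, Matrix.sub_apply, Matrix.smul_apply, smul_eq_mul]
  have h1 : |(1 : Matrix (Fin r) (Fin r) ℝ) i j| ≤ 1 := by
    rw [Matrix.one_apply]; split_ifs <;> simp
  have h2 : |c * rinv Φ c i j| ≤ 1 := by
    rw [abs_mul, abs_of_pos hc]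
    have := rinv_entry Φ hc i j
    rwa [le_div_iff₀ hc, mul_comm] at this
  exact (abs_sub _ _).trans (by linarith)

theorem gram_rinv_diag (Φ : Fin r → H) {c : ℝ} (hc : 0 < c) (i : Fin r) :
    0 ≤ (gram Φ * rinv Φ c) i i := by
  have h := energy_eq Φ hc (Pi.single i 1)
  have h2 : (Pi.single i (1:ℝ) : Fin r → ℝ) ⬝ᵥ (gram Φ * rinv Φ c).mulVec (Pi.single i 1)
    = (gram Φ * rinv Φ c) i i := by simp
  rw [← h2, ← h]
  positivity

/-- Leverage of a direction `v`. -/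
theorem leverage_bound (Φ : Fin r → H) {c : ℝ} (hc : 0 < c) (v : H) (hv : ‖v‖ ≤ 1) (m : ℝ) :
    (fun i => ⟪v, Φ i⟫) ⬝ᵥ (rinv Φ c).mulVec (fun i => ⟪v, Φ i⟫)
      ≤ m ^ 2 + (1 - m) ^ 2 * (∑ i, ⟪v, Φ i⟫ ^ 2) / c := by
  set a : Fin r → ℝ := fun i => ⟪v, Φ i⟫ with ha
  set x := (rinv Φ c).mulVec a with hx
  set q := ∑ l, x l • Φ l with hq
  set s := a ⬝ᵥ x with hs
  have hsv : s = ⟪v, q⟫ := by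
    rw [hs, hq, inner_sum]; simp [dotProduct, ha, real_inner_smul_right, mul_comm]
  have h1 : s = ‖q‖ ^ 2 + c * ∑ i, x i ^ 2 := by
    have h2 : ‖q‖ ^ 2 = ∑ i, x i * ⟪Φ i, q⟫ := by
      rw [← real_inner_self_eq_norm_sq]
      conv_lhs => rw [hq, sum_inner]
      simp only [real_inner_smul_left, ← hq]
    rw [h2, Finset.mul_sum, ← Finset.sum_add_distrib, hs, dotProduct]
    refine Finset.sum_congr rfl fun i _ => ?_
    have := normal_eq Φ hc a i
    rw [← hx, ← hq] at this
    rw [← this]; ring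
  have h3 : s ^ 2 ≤ ‖q‖ ^ 2 := by
    rw [hsv, ← sq_abs]
    have := abs_real_inner_le_norm v q
    have h4 : ‖v‖ * ‖q‖ ≤ ‖q‖ := by nlinarith [norm_nonneg q]
    gcongr; linarith
  have h5 : s ^ 2 ≤ (∑ i, a i ^ 2) * ∑ i, x i ^ 2 := Finset.sum_mul_sq_le_sq_mul_sq _ _ _
  set A := ∑ i, a i ^ 2 with hA
  set X := ∑ i, x i ^ 2 with hX
  have hA0 : 0 ≤ A := Finset.sum_nonneg fun i _ => sq_nonneg _
  have hX0 : 0 ≤ X := Finset.sum_nonneg fun i _ => sq_nonneg _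
  have hs0 : 0 ≤ s := by rw [h1]; positivity
  have h6 : c * s ≤ A * (1 - s) := by
    have h7 : c * X ≤ s - s ^ 2 := by linarith
    have h8 : c * s ^ 2 ≤ A * (s - s ^ 2) := by
      calc c * s ^ 2 ≤ c * (A * X) := by gcongr
        _ = A * (c * X) := by ring
        _ ≤ _ := by gcongr
    rcases hs0.eq_or_lt with h | h
    · rw [← h]; simp [hA0]
    · nlinarith
  rw [← sub_nonneg, show m ^ 2 + (1 - m) ^ 2 * A / c - s = (m^2 * c + (1-m)^2 * A - s * c) / c by
    field_simp]
  apply div_nonneg _ hc.le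
  -- (c + A) * (m²c + (1-m)²A) ≥ c A ≥ (c+A) c s
  have h9 : (c + A) * (m^2 * c + (1-m)^2 * A) ≥ c * A := by
    nlinarith [sq_nonneg (m * c - (1-m) * A)]
  have h10 : (c + A) * (s * c) ≤ c * A := by nlinarith
  have h11 : 0 < c + A := by linarith
  nlinarith

/-- Hilbert–Schmidt bound. -/
theorem hs_bound {n : ℕ} (Φ : Fin n → H) (w : Fin n → ℝ) (d : H) :
    (∑ i, w i * ⟪d, Φ i⟫ ^ 2) ^ 2 ≤ ‖d‖ ^ 4 * ∑ i, ∑ j, w i * w j * ⟪Φ i, Φ j⟫ ^ 2 := by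
  classical
  let S : Submodule ℝ H := Submodule.span ℝ (insert d (Set.range Φ))
  have hfin : FiniteDimensional ℝ S :=
    FiniteDimensional.span_of_finite ℝ ((Set.finite_range Φ).insert d)
  let d' : S := ⟨d, Submodule.subset_span (Set.mem_insert _ _)⟩
  let Φ' : Fin n → S := fun i => ⟨Φ i, Submodule.subset_span (Set.mem_insert_of_mem _ ⟨i, rfl⟩)⟩
  let b := stdOrthonormalBasis ℝ S
  have hin : ∀ x y : S, ⟪(x : H), (y : H)⟫ = ∑ a, ⟪x, b a⟫ * ⟪y, b a⟫ := fun x y => by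
    rw [← Submodule.coe_inner, ← b.sum_inner_mul_inner x y]
    exact Finset.sum_congr rfl fun a _ => by rw [real_inner_comm y]
  have h1 : ∀ i, ⟪d, Φ i⟫ = ∑ a, ⟪d', b a⟫ * ⟪Φ' i, b a⟫ := fun i => hin d' (Φ' i)
  have h2 : ∀ i j, ⟪Φ i, Φ j⟫ = ∑ a, ⟪Φ' i, b a⟫ * ⟪Φ' j, b a⟫ := fun i j => hin (Φ' i) (Φ' j)
  have h3 : ‖d‖ ^ 2 = ∑ a, ⟪d', b a⟫ * ⟪d', b a⟫ := by
    rw [← real_inner_self_eq_norm_sq]; exact hin d' d'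
  set D : _ → ℝ := fun a => ⟪d', b a⟫ with hD
  set P : Fin n → _ → ℝ := fun i a => ⟪Φ' i, b a⟫ with hP
  have e1 : ∑ i, w i * ⟪d, Φ i⟫ ^ 2 = ∑ p : _ × _, (D p.1 * D p.2) * ∑ i, w i * P i p.1 * P i p.2 := by
    simp only [h1, sq, Finset.sum_mul_sum]
    simp only [Finset.mul_sum, Fintype.sum_prod_type]
    rw [Finset.sum_comm]
    refine Finset.sum_congr rfl fun a _ => ?_
    rw [Finset.sum_comm]
    refine Finset.sum_congr rfl fun a' _ => Finset.sum_congr rfl fun i _ => ?_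
    ring
  have e2 : ‖d‖ ^ 4 = ∑ p : _ × _, (D p.1 * D p.2) ^ 2 := by
    rw [show ‖d‖ ^ 4 = ‖d‖^2 * ‖d‖^2 by ring, h3, Finset.sum_mul_sum, Fintype.sum_prod_type]
    refine Finset.sum_congr rfl fun a _ => Finset.sum_congr rfl fun a' _ => ?_
    simp only [hD]; ring
  have e3 : ∑ i, ∑ j, w i * w j * ⟪Φ i, Φ j⟫ ^ 2
      = ∑ p : _ × _, (∑ i, w i * P i p.1 * P i p.2) ^ 2 := by
    simp only [h2, sq, Finset.sum_mul_sum]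
    simp only [Finset.mul_sum, Fintype.sum_prod_type]
    have : ∀ (F : Fin n → Fin n → Fin (Module.finrank ℝ S) → Fin (Module.finrank ℝ S) → ℝ),
        ∑ i, ∑ j, ∑ a, ∑ a', F i j a a' = ∑ a, ∑ a', ∑ i, ∑ j, F i j a a' := fun F => by
      have : ∀ i, ∑ j, ∑ a, ∑ a', F i j a a' = ∑ a, ∑ a', ∑ j, F i j a a' := fun i => by
        rw [Finset.sum_comm]
        exact Finset.sum_congr rfl fun a _ => Finset.sum_comm
      simp_rw [this]
      rw [Finset.sum_comm]
      exact Finset.sum_congr rfl fun a _ => Finset.sum_comm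
    rw [this]
    refine Finset.sum_congr rfl fun a _ => Finset.sum_congr rfl fun a' _ =>
      Finset.sum_congr rfl fun i _ => Finset.sum_congr rfl fun j _ => ?_
    simp only [hP]; ring
  rw [e1, e2, e3]
  exact Finset.sum_mul_sq_le_sq_mul_sq _ _ _

end Det

/-- Feature map of a symmetric positive definite kernel (Moore–Aronszajn). -/
theorem exists_feature {D : Type} (k : D → D → ℝ) (hsymm : ∀ z z', k z z' = k z' z)
    (hpd : PosDefKernel k) :
    ∃ (H : Type) (_ : NormedAddCommGroup H) (_ : InnerProductSpace ℝ H) (_ : CompleteSpace H)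
      (Φ : D → H), ∀ z z', ⟪Φ z, Φ z'⟫ = k z z' := by
  classical
  let K : Matrix D D (ℝ →L[ℝ] ℝ) := Matrix.of fun x y => k x y • ContinuousLinearMap.id ℝ ℝ
  have hK : K.PosSemidef := by
    refine ((RKHS.posSemidef_tfae (K := K)).out 0 2).2 ?_
    refine ⟨?_, fun vv => ?_⟩
    · ext x y
      have h1 : star (ContinuousLinearMap.id ℝ ℝ) = ContinuousLinearMap.id ℝ ℝ :=
        star_one (ℝ →L[ℝ] ℝ)
      simp [K, hsymm x y, Matrix.conjTranspose_apply, h1]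
    · have h := hpd vv.support.card (fun i => (vv.support.equivFin.symm i : D))
        (fun i => vv (vv.support.equivFin.symm i : D))
      have h2 : vv.sum (fun x w => vv.sum fun x' w' => ⟪K x' x w, w'⟫)
          = ∑ i : Fin vv.support.card, ∑ j : Fin vv.support.card,
            vv (vv.support.equivFin.symm i : D) * vv (vv.support.equivFin.symm j : D) *
            k (vv.support.equivFin.symm i : D) (vv.support.equivFin.symm j : D) := by
        simp only [Finsupp.sum]
        rw [← Finset.sum_coe_sort, ← vv.support.equivFin.symm.sum_comp]
        refine Finset.sum_congr rfl fun i _ => ?_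
        rw [← Finset.sum_coe_sort, ← vv.support.equivFin.symm.sum_comp]
        refine Finset.sum_congr rfl fun j _ => ?_
        simp [K, hsymm _ (vv.support.equivFin.symm i : D)]
        ring
      rw [h2]
      exact h
  have : Fact K.PosSemidef := ⟨hK⟩
  refine ⟨RKHS.OfKernel K, inferInstance, inferInstance, inferInstance,
    fun z => RKHS.kerFun (RKHS.OfKernel K) z (1 : ℝ), fun z z' => ?_⟩
  rw [← RKHS.kernel_inner, RKHS.OfKernel.kernel_ofKernel]
  simp [K, hsymm z z']

theorem continuous_feature {D H : Type*} [TopologicalSpace D] [NormedAddCommGroup H]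
    [InnerProductSpace ℝ H] (Φ : D → H) (k : D → D → ℝ) (hΦ : ∀ z z', ⟪Φ z, Φ z'⟫ = k z z')
    (hk : Continuous fun q : D × D => k q.1 q.2) : Continuous Φ := by
  rw [continuous_iff_continuousAt]
  intro z0
  rw [ContinuousAt, tendsto_iff_norm_sub_tendsto_zero]
  have h : ∀ z, ‖Φ z - Φ z0‖ = √(k z z - 2 * k z z0 + k z0 z0) := fun z => by
    rw [← hΦ, ← hΦ, ← hΦ, real_inner_self_eq_norm_sq, real_inner_self_eq_norm_sq,
      ← norm_sub_sq_real, Real.sqrt_sq (norm_nonneg _)]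
  simp_rw [h]
  have hc : Continuous fun z => √(k z z - 2 * k z z0 + k z0 z0) := by
    have h1 : Continuous fun z => k z z := hk.comp (continuous_id.prodMk continuous_id)
    have h2 : Continuous fun z => k z z0 := hk.comp (continuous_id.prodMk continuous_const)
    fun_prop
  have := hc.tendsto z0
  have e : √(k z0 z0 - 2 * k z0 z0 + k z0 z0) = 0 := by
    rw [show k z0 z0 - 2 * k z0 z0 + k z0 z0 = 0 by ring, Real.sqrt_zero]
  rwa [e] at this

/-- Hilbert–Schmidt operators are compact. -/
theorem compact_of_hs {E : Type*} [NormedAddCommGroup E] [InnerProductSpace ℝ E] [CompleteSpace E]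
    {ι : Type*} (b : HilbertBasis ι ℝ E) (L : E →L[ℝ] E) (hs : Summable fun i => ‖L (b i)‖ ^ 2) :
    IsCompactOperator L := by
  classical
  let R : ι → E →L[ℝ] E := fun i => (innerSL ℝ (b i)).smulRight (L (b i))
  have hRc : ∀ i, IsCompactOperator (R i) := fun i => by
    have : (R i : E → E) = (ContinuousLinearMap.toSpanSingleton ℝ (L (b i))) ∘ (innerSL ℝ (b i)) := by
      ext x; simp [R]
    rw [this]
    exact (isCompactOperator_of_locallyCompactSpace_dom (innerSL ℝ (b i))).clm_comp _
  have hbound : ∀ (t : Finset ι), ‖∑ i ∈ t, R i‖ ≤ √(∑ i ∈ t, ‖L (b i)‖ ^ 2) := fun t => by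
    refine ContinuousLinearMap.opNorm_le_bound _ (Real.sqrt_nonneg _) fun x => ?_
    rw [_root_.sum_apply]
    calc ‖∑ i ∈ t, R i x‖ ≤ ∑ i ∈ t, ‖R i x‖ := norm_sum_le _ _
      _ = ∑ i ∈ t, ‖⟪b i, x⟫‖ * ‖L (b i)‖ := by
          refine Finset.sum_congr rfl fun i _ => ?_
          simp [R, norm_smul]
      _ ≤ √(∑ i ∈ t, ‖⟪b i, x⟫‖ ^ 2) * √(∑ i ∈ t, ‖L (b i)‖ ^ 2) :=
          Real.sum_mul_le_sqrt_mul_sqrt _ _ _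
      _ ≤ ‖x‖ * √(∑ i ∈ t, ‖L (b i)‖ ^ 2) := by
          gcongr
          rw [Real.sqrt_le_left (norm_nonneg x)]
          exact b.orthonormal.sum_inner_products_le x
      _ = _ := mul_comm _ _
  have hsum : Summable R := by
    rw [summable_iff_vanishing_norm] at hs ⊢
    intro ε hε
    obtain ⟨s, hs⟩ := hs (ε ^ 2) (by positivity)
    refine ⟨s, fun t ht => (hbound t).trans_lt ?_⟩
    rw [Real.sqrt_lt' hε]
    exact (le_abs_self _).trans_lt (hs t ht)
  obtain ⟨T, hT⟩ := hsum
  have hTL : T = L := by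
    ext x
    have h1 : HasSum (fun i => R i x) (T x) := by
      have := hT.mapL (ContinuousLinearMap.apply ℝ E x)
      simpa using this
    have h2 : HasSum (fun i => R i x) (L x) := by
      have := (b.hasSum_repr x).mapL L
      simpa [R, b.repr_apply_apply] using this
    exact h1.unique h2
  rw [← hTL]
  refine isCompactOperator_of_tendsto hT (Eventually.of_forall fun t => ?_)
  have : (∑ i ∈ t, R i) ∈ compactOperator (RingHom.id ℝ) E E :=
    Submodule.sum_mem _ fun i _ => hRc i
  exact this

/-- Eigenbasis of a compact symmetric operator. -/
theorem exists_eigenbasis {E : Type} [NormedAddCommGroup E] [InnerProductSpace ℝ E]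
    [CompleteSpace E] (L : E →L[ℝ] E) (hc : IsCompactOperator L)
    (hsym : ∀ x y, ⟪L x, y⟫ = ⟪x, L y⟫) :
    ∃ (ι : Type) (b : HilbertBasis ι ℝ E) (σ : ι → ℝ), ∀ i, L (b i) = σ i • b i := by
  have hS : (L : E →ₗ[ℝ] E).IsSymmetric := hsym
  have hfam := hS.orthogonalFamily_eigenspaces
  have hcomp : ∀ m : ℝ, CompleteSpace (Module.End.eigenspace (L : E →ₗ[ℝ] E) m) := fun m => by
    have : IsClosed (Module.End.eigenspace (L : E →ₗ[ℝ] E) m : Set E) := by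
      have h : (Module.End.eigenspace (L : E →ₗ[ℝ] E) m : Set E) = {x | L x = m • x} := by
        ext x; simp [Module.End.mem_eigenspace_iff]
      rw [h]
      exact isClosed_eq L.continuous (continuous_const_smul m)
    exact this.completeSpace_coe
  choose w b hb using fun m : ℝ =>
    exists_hilbertBasis ℝ (Module.End.eigenspace (L : E →ₗ[ℝ] E) m)
  have ho := hfam.orthonormal_sigma_orthonormal (v_family := fun m => (b m : w m → _))
    (fun m => (b m).orthonormal)
  have hbot : (Submodule.span ℝ (Set.range fun a : (m : ℝ) × w m =>
      (Module.End.eigenspace (L : E →ₗ[ℝ] E) a.1).subtypeₗᵢ (b a.1 a.2)))ᗮ = ⊥ := by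
    rw [eq_bot_iff, ← ContinuousLinearMap.orthogonalComplement_iSup_eigenspaces_eq_bot hc hS]
    intro x hx
    rw [← Submodule.iInf_orthogonal, Submodule.mem_iInf]
    intro m
    rw [Submodule.mem_orthogonal]
    intro y hy
    have hz : ∀ a : w m, ⟪((b m a : Module.End.eigenspace (L : E →ₗ[ℝ] E) m) : E), x⟫ = 0 :=
      fun a => (Submodule.mem_orthogonal _ _).1 hx _ (Submodule.subset_span ⟨⟨m, a⟩, rfl⟩)
    have h1 := (((b m).hasSum_repr ⟨y, hy⟩).mapL
      (Module.End.eigenspace (L : E →ₗ[ℝ] E) m).subtypeL).mapL (innerSL ℝ x)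
    have h2 : ∀ a, (innerSL ℝ x) ((Module.End.eigenspace (L : E →ₗ[ℝ] E) m).subtypeL
        (((b m).repr ⟨y, hy⟩ : w m → ℝ) a • b m a)) = 0 := fun a => by
      simp only [map_smul, Submodule.subtypeL_apply, innerSL_apply_apply]
      rw [real_inner_comm, hz a, smul_zero]
    rw [funext h2] at h1
    rw [real_inner_comm]
    simpa using h1.unique hasSum_zero
  refine ⟨(m : ℝ) × w m, HilbertBasis.mkOfOrthogonalEqBot ho hbot, fun a => a.1, fun a => ?_⟩
  rw [HilbertBasis.coe_mkOfOrthogonalEqBot]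
  have := (b a.1 a.2).2
  rw [Module.End.mem_eigenspace_iff] at this
  exact this

/-- Effective dimension in an eigenbasis. -/
theorem inverse_eig {E : Type} [NormedAddCommGroup E] [InnerProductSpace ℝ E]
    [CompleteSpace E] (L : E →L[ℝ] E) (hc : IsCompactOperator L)
    (hpos : ∀ x, 0 ≤ ⟪L x, x⟫) {lam : ℝ} (hl : 0 < lam) (x : E) (s : ℝ) (hs : 0 ≤ s)
    (hx : L x = s • x) :
    (Ring.inverse (L + lam • (1 : E →L[ℝ] E)) * L) x = (s / (s + lam)) • x := by
  have hu : IsUnit (L + lam • (1 : E →L[ℝ] E)) := by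
    rcases hc.hasEigenvalue_or_mem_resolventSet (μ := -lam) (by linarith) with h | h
    · exfalso
      obtain ⟨v, hv⟩ := h.exists_hasEigenvector
      have h1 : L v = (-lam) • v := hv.apply_eq_smul
      have h2 := hpos v
      rw [h1, real_inner_smul_left, real_inner_self_eq_norm_sq] at h2
      have : 0 < ‖v‖ := norm_pos_iff.2 hv.2
      have : 0 < lam * ‖v‖ ^ 2 := by positivity
      linarith
    · rw [spectrum.mem_resolventSet_iff] at h
      have := h.neg
      rw [neg_sub, Algebra.algebraMap_eq_smul_one, neg_smul, sub_neg_eq_add] at this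
      exact this
  have h1 : (L + lam • (1 : E →L[ℝ] E)) x = (s + lam) • x := by
    simp [hx, add_smul]
  have h2 : (Ring.inverse (L + lam • (1 : E →L[ℝ] E))) ((L + lam • (1 : E →L[ℝ] E)) x) = x := by
    have := Ring.inverse_mul_cancel _ hu
    exact congrArg (fun T : E →L[ℝ] E => T x) this
  rw [h1, map_smul] at h2
  have h3 : s + lam ≠ 0 := by positivity
  change (Ring.inverse (L + lam • (1 : E →L[ℝ] E))) (L x) = _
  rw [hx, map_smul]
  have h4 : (Ring.inverse (L + lam • (1 : E →L[ℝ] E))) x = (s + lam)⁻¹ • x := by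
    conv_rhs => rw [← h2]
    rw [smul_smul, inv_mul_cancel₀ h3, one_smul]
  rw [h4, smul_smul, div_eq_mul_inv]

section Mercer
variable {D : Type} [TopologicalSpace D] [SecondCountableTopology D] [MeasurableSpace D]
  [BorelSpace D] {ν : Measure D} [IsProbabilityMeasure ν]
  {H : Type} [NormedAddCommGroup H] [InnerProductSpace ℝ H] [CompleteSpace H]
  {Φ : D → H} {M : ℝ}

theorem memLp_feat (hΦc : Continuous Φ) (hM : ∀ z, ‖Φ z‖ ≤ M) (x : H) :
    MemLp (fun z => ⟪x, Φ z⟫) 2 ν := by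
  refine MemLp.of_bound (by fun_prop) (‖x‖ * M) (Eventually.of_forall fun z => ?_)
  exact (norm_inner_le_norm _ _).trans (by gcongr; exact hM z)

/-- Embedding `L² → H`. -/
def SS (ν : Measure D) (Φ : D → H) (g : D → ℝ) : H := ∫ z, g z • Φ z ∂ν

theorem integrable_smul_feat (hΦc : Continuous Φ) (hM : ∀ z, ‖Φ z‖ ≤ M) (g : Lp ℝ 2 ν) :
    Integrable (fun z => g z • Φ z) ν := by
  have hg : Integrable g ν := (Lp.memLp g).integrable (by norm_num)
  refine (hg.norm.mul_const M).mono' (hg.1.smul hΦc.aestronglyMeasurable)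
    (Eventually.of_forall fun z => ?_)
  rw [norm_smul]
  gcongr
  exact hM z

theorem inner_SS (hΦc : Continuous Φ) (hM : ∀ z, ‖Φ z‖ ≤ M) (g : Lp ℝ 2 ν) (x : H) :
    ⟪x, SS ν Φ g⟫ = ∫ z, g z * ⟪x, Φ z⟫ ∂ν := by
  rw [SS, ← integral_inner (integrable_smul_feat hΦc hM g)]
  simp only [real_inner_smul_right]

theorem inner_SS_toLp (hΦc : Continuous Φ) (hM : ∀ z, ‖Φ z‖ ≤ M) (g : Lp ℝ 2 ν) (x : H) :
    ⟪x, SS ν Φ g⟫ = ⟪g, (memLp_feat (ν := ν) hΦc hM x).toLp⟫ := by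
  rw [inner_SS hΦc hM, L2.inner_def]
  refine integral_congr_ae ?_
  filter_upwards [(memLp_feat (ν := ν) hΦc hM x).coeFn_toLp] with z hz
  rw [hz]; simp [mul_comm]

theorem SS_SS (hΦc : Continuous Φ) (hM : ∀ z, ‖Φ z‖ ≤ M)
    (L : Lp ℝ 2 ν →L[ℝ] Lp ℝ 2 ν)
    (hL : ∀ g : Lp ℝ 2 ν, (L g : D → ℝ) =ᵐ[ν] fun z => ∫ z', ⟪Φ z, Φ z'⟫ * g z' ∂ν)
    (g h : Lp ℝ 2 ν) : ⟪SS ν Φ g, SS ν Φ h⟫ = ⟪L g, h⟫ := by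
  rw [inner_SS hΦc hM, L2.inner_def]
  refine integral_congr_ae ?_
  filter_upwards [hL g] with z hz
  rw [hz, real_inner_comm, inner_SS hΦc hM]
  simp [mul_comm]

theorem L_compact (hΦc : Continuous Φ) (hM : ∀ z, ‖Φ z‖ ≤ M)
    (L : Lp ℝ 2 ν →L[ℝ] Lp ℝ 2 ν)
    (hL : ∀ g : Lp ℝ 2 ν, (L g : D → ℝ) =ᵐ[ν] fun z => ∫ z', ⟪Φ z, Φ z'⟫ * g z' ∂ν) :
    IsCompactOperator L := by
  obtain ⟨w, b, -⟩ := exists_hilbertBasis ℝ (Lp ℝ 2 ν)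
  refine compact_of_hs b L (summable_of_sum_le (fun i => sq_nonneg _) (c := (M * M) ^ 2) fun s => ?_)
  have h1 : ∀ i, ‖L (b i)‖ ^ 2 = ∫ z, (L (b i) z) ^ 2 ∂ν := fun i => by
    rw [← real_inner_self_eq_norm_sq, L2.inner_def]
    simp [sq]
  have hInteg : ∀ i, Integrable (fun z => (L (b i) z) ^ 2) ν := fun i =>
    (Lp.memLp (L (b i))).integrable_sq
  simp_rw [h1]
  rw [← integral_finsetSum _ fun i _ => hInteg i]
  have hae : ∀ᵐ z ∂ν, ∀ i ∈ s, L (b i) z = ⟪b i, (memLp_feat (ν := ν) hΦc hM (Φ z)).toLp⟫ := by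
    rw [Filter.eventually_all_finset]
    intro i _
    filter_upwards [hL (b i)] with z hz
    rw [hz, ← inner_SS_toLp hΦc hM, inner_SS hΦc hM]
    simp [mul_comm]
  calc ∫ z, ∑ i ∈ s, (L (b i) z) ^ 2 ∂ν ≤ ∫ _, (M * M) ^ 2 ∂ν := by
        refine integral_mono_ae (integrable_finsetSum _ fun i _ => hInteg i) (integrable_const _) ?_
        filter_upwards [hae] with z hz
        have hM0 : 0 ≤ M := (norm_nonneg _).trans (hM z)
        rw [Finset.sum_congr rfl fun i hi => by rw [hz i hi]]
        have := b.orthonormal.sum_inner_products_le (s := s)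
          ((memLp_feat (ν := ν) hΦc hM (Φ z)).toLp)
        simp only [Real.norm_eq_abs, sq_abs] at this
        refine this.trans ?_
        gcongr
        have h2 := Lp.norm_le_of_ae_bound (μ := ν) (p := 2)
          (f := (memLp_feat (ν := ν) hΦc hM (Φ z)).toLp) (C := M * M) (by positivity) (by
            filter_upwards [(memLp_feat (ν := ν) hΦc hM (Φ z)).coeFn_toLp] with z' hz'
            rw [hz']
            exact (norm_inner_le_norm _ _).trans (by gcongr <;> exact hM _))
        have h3 : measureUnivNNReal ν = 1 := by ext; simp [measureUnivNNReal]
        simpa [h3] using h2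
    _ = _ := by simp

/-- Mercer-type package. -/
theorem mercer (hΦc : Continuous Φ) (hM : ∀ z, ‖Φ z‖ ≤ M)
    (L : Lp ℝ 2 ν →L[ℝ] Lp ℝ 2 ν)
    (hL : ∀ g : Lp ℝ 2 ν, (L g : D → ℝ) =ᵐ[ν] fun z => ∫ z', ⟪Φ z, Φ z'⟫ * g z' ∂ν)
    (Q γ : ℝ) (hA2 : TraceAssumption ν L Q γ)
    (β : ℝ) (hβ1 : 1 < β) (P : Lp ℝ 2 ν →L[ℝ] Lp ℝ 2 ν)
    (hP : IsFracPower L (β / 2) P) (f : D → ℝ) (hf : MemLp f 2 ν)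
    (hfr : hf.toLp f ∈ Set.range ⇑P) :
    ∃ (κ : Type) (_ : Countable κ) (v : κ → H) (σ : κ → ℝ) (u : H),
      (∀ k, ‖v k‖ ≤ 1) ∧
      (∃ G : Set D, (∀ᵐ z ∂ν, z ∈ G) ∧ ∀ z ∈ G, ∀ z' ∈ G,
        HasSum (fun k => ⟪v k, Φ z⟫ * ⟪v k, Φ z'⟫) ⟪Φ z, Φ z'⟫) ∧
      (∀ k, 0 ≤ σ k) ∧ (∀ k, ∫ z, ⟪v k, Φ z⟫ ^ 2 ∂ν = σ k) ∧
      (∀ lam : ℝ, 0 < lam → (Summable fun k => σ k / (σ k + lam)) ∧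
        ∑' k, σ k / (σ k + lam) ≤ Q * lam ^ (-γ)) ∧
      f =ᵐ[ν] fun z => ⟪u, Φ z⟫ := by
  have hcomp := L_compact hΦc hM L hL
  have hSS := SS_SS hΦc hM L hL
  have hsym : ∀ x y, ⟪L x, y⟫ = ⟪x, L y⟫ := fun x y => by
    rw [← hSS, real_inner_comm, hSS, real_inner_comm]
  have hpos : ∀ x, 0 ≤ ⟪L x, x⟫ := fun x => by
    rw [← hSS]; exact real_inner_self_nonneg
  obtain ⟨ι, b, s, hb⟩ := exists_eigenbasis L hcomp hsym
  have hs0 : ∀ i, 0 ≤ s i := fun i => by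
    have := hpos (b i)
    rw [hb, real_inner_smul_left, real_inner_self_eq_norm_sq, b.orthonormal.1 i] at this
    simpa using this
  have hbb : ∀ i j, i ≠ j → ⟪b i, b j⟫ = 0 := fun i j h => b.orthonormal.2 h
  have hSn : ∀ i, ‖SS ν Φ (b i)‖ ^ 2 = s i := fun i => by
    rw [← real_inner_self_eq_norm_sq, hSS, hb, real_inner_smul_left, real_inner_self_eq_norm_sq,
      b.orthonormal.1 i]; simp
  let κ := {i : ι // 0 < s i}
  let v : κ → H := fun i => (√(s i))⁻¹ • SS ν Φ (b i)
  have hSv : ∀ i : κ, SS ν Φ (b i) = √(s i) • v i := fun i => by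
    simp only [v]
    rw [smul_smul, mul_inv_cancel₀ (Real.sqrt_pos.2 i.2).ne', one_smul]
  have hv : Orthonormal ℝ v := by
    refine ⟨fun i => ?_, fun i j hij => ?_⟩
    · have : ‖SS ν Φ (b i)‖ = √(s i) := by rw [← hSn, Real.sqrt_sq (norm_nonneg _)]
      simp only [v]
      rw [norm_smul, this, norm_inv, Real.norm_of_nonneg (Real.sqrt_nonneg _),
        inv_mul_cancel₀ (Real.sqrt_pos.2 i.2).ne']
    · simp only [v]
      rw [real_inner_smul_left, real_inner_smul_right, hSS, hb, real_inner_smul_left,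
        hbb _ _ (fun h => hij (Subtype.ext h))]
      simp
  -- coefficient formula
  have hcoef : ∀ (x : H) (i : ι), ⟪b i, (memLp_feat (ν := ν) hΦc hM x).toLp⟫
      = ⟪x, SS ν Φ (b i)⟫ := fun x i => (inner_SS_toLp hΦc hM (b i) x).symm
  have hzero : ∀ i, ¬ 0 < s i → SS ν Φ (b i) = 0 := fun i hi => by
    have : s i = 0 := le_antisymm (not_lt.1 hi) (hs0 i)
    have h2 := hSn i
    rw [this] at h2
    exact norm_eq_zero.1 (pow_eq_zero_iff (two_ne_zero) |>.1 h2)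
  have hperp : ∀ x : H, (∀ k, ⟪v k, x⟫ = 0) → ∀ᵐ z ∂ν, ⟪x, Φ z⟫ = 0 := fun x hx => by
    have h0 : (memLp_feat (ν := ν) hΦc hM x).toLp = 0 := by
      have : b.repr ((memLp_feat (ν := ν) hΦc hM x).toLp) = 0 := by
        ext i
        rw [b.repr_apply_apply, hcoef]
        by_cases hi : 0 < s i
        · rw [hSv ⟨i, hi⟩, real_inner_smul_right, real_inner_comm, hx]; simp
        · rw [hzero i hi]; simp
      simpa using this
    have h1 := (memLp_feat (ν := ν) hΦc hM x).coeFn_toLp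
    rw [h0] at h1
    filter_upwards [h1, Lp.coeFn_zero ℝ 2 ν] with z hz hz'
    rw [← hz, hz']; rfl
  -- summability
  have hvint : ∀ k, ∫ z, ⟪v k, Φ z⟫ ^ 2 ∂ν = s k := fun k => by
    have h1 : ‖(memLp_feat (ν := ν) hΦc hM (v k)).toLp‖ ^ 2 = ∫ z, ⟪v k, Φ z⟫ ^ 2 ∂ν := by
      rw [← real_inner_self_eq_norm_sq, L2.inner_def]
      refine integral_congr_ae ?_
      filter_upwards [(memLp_feat (ν := ν) hΦc hM (v k)).coeFn_toLp] with z hz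
      rw [hz]; simp [sq]
    have h2 : (memLp_feat (ν := ν) hΦc hM (v k)).toLp = √(s k) • b k := by
      apply b.repr.injective
      ext i
      rw [b.repr_apply_apply, b.repr_apply_apply, hcoef, real_inner_smul_right]
      by_cases hi : 0 < s i
      · rw [hSv ⟨i, hi⟩, real_inner_smul_right]
        by_cases hik : k = ⟨i, hi⟩
        · rw [← hik, real_inner_self_eq_norm_sq, hv.1, hik, real_inner_self_eq_norm_sq,
            b.orthonormal.1]
        · rw [hv.2 hik, hbb i k (fun h => hik (Subtype.ext h.symm)), mul_zero, mul_zero]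
      · rw [hzero i hi, hbb i k (fun h => hi (h ▸ k.2))]; simp
    rw [← h1, h2, norm_smul, b.orthonormal.1, mul_one, Real.norm_of_nonneg (Real.sqrt_nonneg _),
      Real.sq_sqrt (hs0 k)]
  have hInteg : ∀ k, Integrable (fun z => ⟪v k, Φ z⟫ ^ 2) ν := fun k =>
    (memLp_feat (ν := ν) hΦc hM (v k)).integrable_sq
  have hsumk : Summable fun k : κ => s k := by
    refine summable_of_sum_le (fun k => hs0 k) (c := M ^ 2) fun t => ?_
    simp_rw [← hvint]
    rw [← integral_finsetSum _ fun i _ => hInteg i]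
    calc ∫ z, ∑ k ∈ t, ⟪v k, Φ z⟫ ^ 2 ∂ν ≤ ∫ _, M ^ 2 ∂ν := by
          refine integral_mono (integrable_finsetSum _ fun i _ => hInteg i) (integrable_const _) ?_
          intro z
          have := hv.sum_inner_products_le (s := t) (Φ z)
          simp only [Real.norm_eq_abs, sq_abs] at this
          exact this.trans (pow_le_pow_left₀ (norm_nonneg _) (hM z) 2)
      _ = _ := by simp
  have hcount : Countable κ := by
    have h := hsumk.countable_support
    have h2 : Function.support (fun k : κ => s k) = Set.univ := by
      ext k; simpa using k.2.ne'
    rw [h2] at h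
    exact Set.countable_univ_iff.1 h
  have hsum : Summable s := by
    have hinj : Function.Injective (Subtype.val : κ → ι) := Subtype.val_injective
    refine (hinj.summable_iff ?_).1 hsumk
    intro i hi
    refine le_antisymm (not_lt.1 fun h => hi ⟨⟨i, h⟩, rfl⟩) (hs0 i)
  -- trace
  have htrace : ∀ lam : ℝ, 0 < lam → (Summable fun k : κ => s k / (s k + lam)) ∧
        ∑' k : κ, s k / (s k + lam) ≤ Q * lam ^ (-γ) := fun lam hl => by
    have h1 := hA2 lam hl ι b
    have h2 : ∀ i, ⟪(Ring.inverse (L + lam • (1 : Lp ℝ 2 ν →L[ℝ] Lp ℝ 2 ν)) * L) (b i), b i⟫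
        = s i / (s i + lam) := fun i => by
      rw [inverse_eig L hcomp hpos hl (b i) (s i) (hs0 i) (hb i), real_inner_smul_left,
        real_inner_self_eq_norm_sq, b.orthonormal.1]; simp
    simp_rw [h2] at h1
    have hS : Summable fun i => s i / (s i + lam) := by
      refine Summable.of_nonneg_of_le (fun i => ?_) (fun i => ?_) (hsum.div_const lam)
      · have := hs0 i; positivity
      · have := hs0 i
        gcongr
        · linarith
    have hinj : Function.Injective (Subtype.val : κ → ι) := Subtype.val_injective
    refine ⟨hS.comp_injective hinj, ?_⟩
    refine le_trans (le_of_eq ?_) h1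
    refine hinj.tsum_eq (f := fun i => s i / (s i + lam)) ?_
    intro i hi
    by_contra hcon
    apply hi
    have : s i = 0 := le_antisymm (not_lt.1 fun h => hcon ⟨⟨i, h⟩, rfl⟩) (hs0 i)
    simp [this]
  -- source condition
  obtain ⟨g, hg⟩ := hfr
  have hu : ∃ u : H, ∀ k : κ, ⟪v k, u⟫ = s k ^ ((β - 1) / 2) * ⟪b k, g⟫ := by
    let c : κ → ℝ := fun k => s k ^ ((β - 1) / 2) * ⟪b k, g⟫
    have hc : Summable fun k => ‖c k‖ ^ 2 := by
      have hg2 : Summable fun k : κ => ⟪b k, g⟫ ^ 2 := by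
        have h := (b.orthonormal.comp (Subtype.val : κ → ι) Subtype.val_injective).inner_products_summable g
        simpa using h
      have hbd : ∀ k : κ, s k ≤ ∑' k : κ, s k := fun k => hsumk.le_tsum k fun j _ => hs0 j
      refine Summable.of_nonneg_of_le (fun k => sq_nonneg _) (fun k => ?_)
        (hg2.mul_left (((∑' k : κ, s k) ^ ((β - 1) / 2)) ^ 2))
      simp only [c, Real.norm_eq_abs, sq_abs, mul_pow]
      gcongr
      · exact Real.rpow_nonneg (hs0 k) _
      · exact hs0 k
      · exact hbd k
    have hsm : Summable fun k => c k • v k := by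
      have := (hv.orthogonalFamily.summable_iff_norm_sq_summable c).2 hc
      simpa using this
    refine ⟨∑' k, c k • v k, fun k => ?_⟩
    have h1 := hsm.hasSum.mapL (innerSL ℝ (v k))
    have h2 : ∀ j, j ≠ k → (innerSL ℝ (v k)) (c j • v j) = 0 := fun j hj => by
      simp only [map_smul, innerSL_apply_apply]
      rw [hv.2 hj.symm, smul_zero]
    have h3 := h1.unique (hasSum_single k h2)
    simp only [innerSL_apply_apply, real_inner_smul_right, real_inner_self_eq_norm_sq, hv.1] at h3
    rw [h3]; simp [c]
  obtain ⟨u, hu⟩ := hu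
  have hfu : f =ᵐ[ν] fun z => ⟪u, Φ z⟫ := by
    have : hf.toLp f = (memLp_feat (ν := ν) hΦc hM u).toLp := by
      apply b.repr.injective
      ext i
      rw [b.repr_apply_apply, b.repr_apply_apply, hcoef, ← hg, ← hP.1, hP.2 (s i) (b i) (hb i),
        real_inner_smul_left]
      by_cases hi : 0 < s i
      · rw [hSv ⟨i, hi⟩, real_inner_smul_right, real_inner_comm (v ⟨i, hi⟩) u, hu, ← mul_assoc]
        congr 1
        rw [Real.sqrt_eq_rpow, ← Real.rpow_add hi]
        congr 1; ring
      · rw [hzero i hi, inner_zero_right]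
        have : s i = 0 := le_antisymm (not_lt.1 hi) (hs0 i)
        rw [this, Real.zero_rpow (by linarith), zero_mul]
    have h2 := hf.coeFn_toLp
    rw [this] at h2
    exact h2.symm.trans (memLp_feat (ν := ν) hΦc hM u).coeFn_toLp
  -- expansion
  let V : Submodule ℝ H := (Submodule.span ℝ (Set.range v)).topologicalClosure
  have hVc : CompleteSpace V := (Submodule.isClosed_topologicalClosure _).completeSpace_coe
  let v' : κ → V := fun k =>
    ⟨v k, Submodule.le_topologicalClosure _ (Submodule.subset_span ⟨k, rfl⟩)⟩
  have hv' : Orthonormal ℝ v' := by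
    refine ⟨fun k => hv.1 k, fun i j hij => ?_⟩
    change ⟪v' i, v' j⟫ = 0
    rw [Submodule.coe_inner]; exact hv.2 hij
  have hspan : ∀ x : H, (∀ k, ⟪v k, x⟫ = 0) → x ∈ Vᗮ := fun x hx => by
    rw [Submodule.orthogonal_closure, Submodule.mem_orthogonal]
    intro y hy
    induction hy using Submodule.span_induction with
    | mem y hy => obtain ⟨k, rfl⟩ := hy; exact hx k
    | zero => simp
    | add a b _ _ ha hb => rw [inner_add_left, ha, hb, add_zero]
    | smul c a _ ha => rw [real_inner_smul_left, ha, mul_zero]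
  have hbot : (Submodule.span ℝ (Set.range v'))ᗮ = ⊥ := by
    rw [eq_bot_iff]
    intro y hy
    have h1 : ∀ k, ⟪v k, (y : H)⟫ = 0 := fun k => by
      have := (Submodule.mem_orthogonal _ _).1 hy (v' k) (Submodule.subset_span ⟨k, rfl⟩)
      rwa [Submodule.coe_inner] at this
    have h2 := hspan y h1
    have h3 : ⟪(y : H), (y : H)⟫ = 0 := (Submodule.mem_orthogonal _ _).1 h2 y y.2
    rw [Submodule.mem_bot]
    exact Subtype.ext (inner_self_eq_zero.1 h3)
  let b' := HilbertBasis.mkOfOrthogonalEqBot hv' hbot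
  have hG : ∀ᵐ z ∂ν, Φ z ∈ V := by
    have hsep : TopologicalSpace.IsSeparable (Set.range fun z => Φ z - V.starProjection (Φ z)) :=
      TopologicalSpace.isSeparable_range (hΦc.sub (V.starProjection.continuous.comp hΦc))
    have := ae_eq_zero_of_forall_dual_of_isSeparable ℝ (μ := ν) hsep
      (f := fun z => Φ z - V.starProjection (Φ z)) (fun c => by
        obtain ⟨x, rfl⟩ := (InnerProductSpace.toDual ℝ H).surjective c
        have h1 : ∀ k, ⟪v k, x - V.starProjection x⟫ = 0 := fun k =>
          (Submodule.mem_orthogonal _ _).1 (V.sub_starProjection_mem_orthogonal x) (v k) (v' k).2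
        filter_upwards [hperp _ h1] with z hz
        simp only [InnerProductSpace.toDual_apply_apply, Pi.zero_apply]
        rw [inner_sub_right, ← Submodule.inner_starProjection_left_eq_right, ← inner_sub_left]
        exact hz) (Eventually.of_forall fun z => ⟨z, rfl⟩)
    filter_upwards [this] with z hz
    have h2 : Φ z = V.starProjection (Φ z) := sub_eq_zero.1 hz
    rw [h2]
    exact Submodule.starProjection_apply_mem _ _
  refine ⟨κ, hcount, v, fun k => s k, u, fun k => (hv.1 k).le, ⟨{z | Φ z ∈ V}, hG, ?_⟩,
    fun k => hs0 k, hvint, htrace, hfu⟩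
  intro z hz z' hz'
  have h := b'.hasSum_inner_mul_inner ⟨Φ z, hz⟩ ⟨Φ z', hz'⟩
  simp only [b', HilbertBasis.coe_mkOfOrthogonalEqBot, Submodule.coe_inner] at h
  have hfun : (fun k => ⟪v k, Φ z⟫ * ⟪v k, Φ z'⟫) = fun k => ⟪Φ z, v k⟫ * ⟪v k, Φ z'⟫ := by
    funext k; rw [real_inner_comm (v k) (Φ z)]
  rw [hfun]
  exact h

end Mercer

section Trace
variable {D : Type} [TopologicalSpace D] [SecondCountableTopology D] [MeasurableSpace D]
  [BorelSpace D]
  {H : Type} [NormedAddCommGroup H] [InnerProductSpace ℝ H]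
  {Φ : D → H} {M : ℝ}

theorem continuous_rinv (hΦc : Continuous Φ) {r : ℕ} {c : ℝ} (hc : 0 < c) :
    Continuous fun z : Fin r → D => rinv (fun i => Φ (z i)) c := by
  have h1 : Continuous fun z : Fin r → D =>
      gram (fun i => Φ (z i)) + c • (1 : Matrix (Fin r) (Fin r) ℝ) := by
    refine Continuous.add ?_ continuous_const
    refine continuous_matrix fun i j => ?_
    change Continuous fun z : Fin r → D => ⟪Φ (z i), Φ (z j)⟫
    fun_prop
  unfold rinv
  simp only [Matrix.inv_def, Ring.inverse_eq_inv']
  refine Continuous.smul (Continuous.inv₀ h1.matrix_det fun z => ?_) h1.matrix_adjugate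
  exact (reg_posDef _ hc).det_pos.ne'

theorem continuous_gram_rinv (hΦc : Continuous Φ) {r : ℕ} {c : ℝ} (hc : 0 < c) (i j : Fin r) :
    Continuous fun z : Fin r → D =>
      (gram (fun i => Φ (z i)) * rinv (fun i => Φ (z i)) c) i j := by
  have h1 : Continuous fun z : Fin r → D => gram (fun i => Φ (z i)) := by
    refine continuous_matrix fun i j => ?_
    change Continuous fun z : Fin r → D => ⟪Φ (z i), Φ (z j)⟫
    fun_prop
  exact (h1.matrix_mul (continuous_rinv hΦc hc)).matrix_elem i j

theorem rinv_symm {r : ℕ} (Ψ : Fin r → H) (c : ℝ) (i j : Fin r) :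
    rinv Ψ c i j = rinv Ψ c j i := by
  have : (rinv Ψ c).transpose = rinv Ψ c := by
    unfold rinv
    rw [Matrix.transpose_nonsing_inv]
    congr 1
    ext i j
    simp [gram, Matrix.one_apply, real_inner_comm, eq_comm]
  conv_lhs => rw [← this]
  rfl

variable {ν : Measure D} [IsProbabilityMeasure ν]
  {Ω : Type} [MeasurableSpace Ω] {μ : Measure Ω} [IsProbabilityMeasure μ]

theorem trace_bound [CompleteSpace H] (hΦc : Continuous Φ) (hM : ∀ z, ‖Φ z‖ ≤ M)
    {κ : Type} [Countable κ] (v : κ → H) (σ : κ → ℝ)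
    (hv : ∀ k, ‖v k‖ ≤ 1) (G : Set D) (hG : ∀ᵐ z ∂ν, z ∈ G)
    (hexp : ∀ z ∈ G, ∀ z' ∈ G,
        HasSum (fun k => ⟪v k, Φ z⟫ * ⟪v k, Φ z'⟫) ⟪Φ z, Φ z'⟫)
    (hσ : ∀ k, 0 ≤ σ k) (hInteg : ∀ k, ∫ z, ⟪v k, Φ z⟫ ^ 2 ∂ν = σ k)
    {lam T : ℝ} (hlam : 0 < lam) (hsum : Summable fun k => σ k / (σ k + lam))
    (hT : ∑' k, σ k / (σ k + lam) ≤ T) {r : ℕ} (hr : 0 < r)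
    (zs : Fin r → Ω → D) (hzs : ∀ i, Measurable (zs i)) (hlaw : ∀ i, μ.map (zs i) = ν) :
    ∫ ω, ∑ i, (gram (fun i => Φ (zs i ω)) * rinv (fun i => Φ (zs i ω)) (r * lam)) i i ∂μ ≤ T := by
  have hr' : (0:ℝ) < r := by exact_mod_cast hr
  have hc : 0 < (r:ℝ) * lam := by positivity
  have hzm : Measurable fun ω => fun i => zs i ω := measurable_pi_iff.2 hzs
  set lev : κ → Ω → ℝ := fun k ω => (fun i => ⟪v k, Φ (zs i ω)⟫) ⬝ᵥ
    (rinv (fun i => Φ (zs i ω)) (r * lam)).mulVec (fun i => ⟪v k, Φ (zs i ω)⟫) with hlev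
  have hlm : ∀ k, Measurable (lev k) := fun k => by
    have : Continuous fun z : Fin r → D => (fun i => ⟪v k, Φ (z i)⟫) ⬝ᵥ
      (rinv (fun i => Φ (z i)) (r * lam)).mulVec (fun i => ⟪v k, Φ (z i)⟫) := by
      have h1 : Continuous fun z : Fin r → D => fun i => ⟪v k, Φ (z i)⟫ := by fun_prop
      exact h1.dotProduct ((continuous_rinv hΦc hc).matrix_mulVec h1)
    exact this.measurable.comp hzm
  have hl0 : ∀ k ω, 0 ≤ lev k ω := fun k ω => by
    have := ((reg_posDef (fun i => Φ (zs i ω)) hc).inv).posSemidef.dotProduct_mulVec_nonneg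
      (fun i => ⟪v k, Φ (zs i ω)⟫)
    simpa [lev, rinv] using this
  have hGω : ∀ᵐ ω ∂μ, ∀ i, zs i ω ∈ G := by
    rw [ae_all_iff]
    intro i
    refine ae_of_ae_map (hzs i).aemeasurable (p := fun z => z ∈ G) ?_
    rw [hlaw i]; exact hG
  have hsumω : ∀ᵐ ω ∂μ, HasSum (fun k => lev k ω)
      (∑ i, (gram (fun i => Φ (zs i ω)) * rinv (fun i => Φ (zs i ω)) (r * lam)) i i) := by
    filter_upwards [hGω] with ω hω
    have h1 : HasSum (fun k => ∑ i, ∑ j, ⟪v k, Φ (zs i ω)⟫ * ⟪v k, Φ (zs j ω)⟫ *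
        rinv (fun i => Φ (zs i ω)) (r * lam) j i)
        (∑ i, ∑ j, ⟪Φ (zs i ω), Φ (zs j ω)⟫ * rinv (fun i => Φ (zs i ω)) (r * lam) j i) :=
      hasSum_sum fun i _ => hasSum_sum fun j _ => (hexp _ (hω i) _ (hω j)).mul_right _
    have h2 : (fun k => lev k ω) = fun k => ∑ i, ∑ j, ⟪v k, Φ (zs i ω)⟫ * ⟪v k, Φ (zs j ω)⟫ *
        rinv (fun i => Φ (zs i ω)) (r * lam) j i := by
      funext k
      simp only [lev, dotProduct, Matrix.mulVec, Finset.mul_sum]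
      refine Finset.sum_congr rfl fun i _ => Finset.sum_congr rfl fun j _ => ?_
      rw [rinv_symm _ _ i j]; ring
    rw [h2]
    exact h1
  have hvint : ∀ k (i : Fin r), Integrable (fun ω => ⟪v k, Φ (zs i ω)⟫ ^ 2) μ := fun k i => by
    have h := (memLp_feat (ν := ν) hΦc hM (v k)).integrable_sq
    rw [← hlaw i] at h
    exact h.comp_measurable (hzs i)
  have hvI : ∀ k (i : Fin r), ∫ ω, ⟪v k, Φ (zs i ω)⟫ ^ 2 ∂μ = σ k := fun k i => by
    rw [← hInteg k, ← hlaw i, integral_map (hzs i).aemeasurable]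
    exact (by fun_prop : Continuous fun z => ⟪v k, Φ z⟫ ^ 2).aestronglyMeasurable
  have hlevI : ∀ k, ∫⁻ ω, ENNReal.ofReal (lev k ω) ∂μ ≤ ENNReal.ofReal (σ k / (σ k + lam)) := by
    intro k
    have hk := hσ k
    set m := σ k / (σ k + lam) with hm
    have hi2 : Integrable (fun ω => ∑ i : Fin r, ⟪v k, Φ (zs i ω)⟫ ^ 2) μ :=
      integrable_finsetSum _ fun i _ => hvint k i
    have hI : Integrable (fun ω => m ^ 2 +
        (1 - m) ^ 2 * (∑ i : Fin r, ⟪v k, Φ (zs i ω)⟫ ^ 2) / (r * lam)) μ :=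
      (integrable_const _).add ((hi2.const_mul _).div_const _)
    calc ∫⁻ ω, ENNReal.ofReal (lev k ω) ∂μ
        ≤ ∫⁻ ω, ENNReal.ofReal (m ^ 2 +
        (1 - m) ^ 2 * (∑ i : Fin r, ⟪v k, Φ (zs i ω)⟫ ^ 2) / (r * lam)) ∂μ :=
          lintegral_mono fun ω => ENNReal.ofReal_le_ofReal (leverage_bound _ hc _ (hv k) m)
      _ = ENNReal.ofReal (∫ ω, m ^ 2 +
        (1 - m) ^ 2 * (∑ i : Fin r, ⟪v k, Φ (zs i ω)⟫ ^ 2) / (r * lam) ∂μ) := by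
          rw [ofReal_integral_eq_lintegral_ofReal hI (Eventually.of_forall fun ω => by
            change 0 ≤ _; positivity)]
      _ = ENNReal.ofReal m := by
          congr 1
          rw [integral_add (integrable_const _) ((hi2.const_mul _).div_const _),
            integral_div, integral_const_mul, integral_finsetSum _ fun i _ => hvint k i]
          simp only [hvI]
          simp only [integral_const, probReal_univ, smul_eq_mul, one_mul, Finset.sum_const,
            Finset.card_univ, Fintype.card_fin, nsmul_eq_mul]
          rw [hm]
          have : σ k + lam ≠ 0 := by positivity
          field_simp
          ring
  have hint0 : ∀ᵐ ω ∂μ, 0 ≤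
      ∑ i, (gram (fun i => Φ (zs i ω)) * rinv (fun i => Φ (zs i ω)) (r * lam)) i i :=
    Eventually.of_forall fun ω => Finset.sum_nonneg fun i _ => gram_rinv_diag _ hc i
  have hT0 : 0 ≤ T := le_trans (tsum_nonneg fun k => by have := hσ k; positivity) hT
  rw [integral_eq_lintegral_of_nonneg_ae hint0]
  · refine ENNReal.toReal_le_of_le_ofReal hT0 ?_
    calc _ = ∫⁻ ω, ∑' k, ENNReal.ofReal (lev k ω) ∂μ := by
          refine lintegral_congr_ae ?_
          filter_upwards [hsumω] with ω hω
          rw [← hω.tsum_eq, ENNReal.ofReal_tsum_of_nonneg (fun k => hl0 k ω) hω.summable]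
      _ = ∑' k, ∫⁻ ω, ENNReal.ofReal (lev k ω) ∂μ :=
          lintegral_tsum fun k => (hlm k).ennreal_ofReal.aemeasurable
      _ ≤ ∑' k, ENNReal.ofReal (σ k / (σ k + lam)) := ENNReal.tsum_le_tsum hlevI
      _ = ENNReal.ofReal (∑' k, σ k / (σ k + lam)) :=
          (ENNReal.ofReal_tsum_of_nonneg (fun k => by have := hσ k; positivity) hsum).symm
      _ ≤ _ := ENNReal.ofReal_le_ofReal hT
  · refine Measurable.aestronglyMeasurable ?_
    refine Finset.measurable_sum _ fun i _ => ?_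
    exact (continuous_gram_rinv hΦc hc i i).measurable.comp hzm

/-- Orthogonality of the noise to everything depending on the covariate and independent data. -/
theorem orth_indep {W V : Type} [MeasurableSpace W] [MeasurableSpace V]
    (A : Ω → W) (B : Ω → V) (hA : Measurable A) (hB : Measurable B) (hAB : IndepFun A B μ)
    (π : W → D) (hπ : Measurable π) (ξ : W → ℝ) (hξ : Measurable ξ) (C : ℝ)
    (hξC : ∀ w, |ξ w| ≤ C)
    (horth : ∀ ψ : D → ℝ, Measurable ψ → (∃ K, ∀ z, |ψ z| ≤ K) →
      ∫ w, ξ w * ψ (π w) ∂(μ.map A) = 0)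
    (F : D × V → ℝ) (hF : Measurable F) (K : ℝ) (hFK : ∀ p, |F p| ≤ K) :
    ∫ ω, ξ (A ω) * F (π (A ω), B ω) ∂μ = 0 := by
  have hmap := (indepFun_iff_map_prod_eq_prod_map_map hA.aemeasurable hB.aemeasurable).1 hAB
  have hPA : IsProbabilityMeasure (μ.map A) := Measure.isProbabilityMeasure_map hA.aemeasurable
  have hPB : IsProbabilityMeasure (μ.map B) := Measure.isProbabilityMeasure_map hB.aemeasurable
  let g : W × V → ℝ := fun p => ξ p.1 * F (π p.1, p.2)
  have hg : Measurable g := by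
    refine (hξ.comp measurable_fst).mul (hF.comp ?_)
    exact (hπ.comp measurable_fst).prodMk measurable_snd
  have hgi : Integrable g ((μ.map A).prod (μ.map B)) := by
    refine Integrable.of_bound hg.aestronglyMeasurable (C * K) (Eventually.of_forall fun p => ?_)
    rw [Real.norm_eq_abs, abs_mul]
    have hC0 : 0 ≤ C := (abs_nonneg _).trans (hξC p.1)
    gcongr
    · exact hξC _
    · exact hFK _
  have h1 : ∫ ω, ξ (A ω) * F (π (A ω), B ω) ∂μ = ∫ p, g p ∂(μ.map fun ω => (A ω, B ω)) := by
    rw [integral_map (hA.prodMk hB).aemeasurable hg.aestronglyMeasurable]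
  rw [h1, hmap, integral_prod_symm _ hgi]
  have : ∀ b, ∫ a, g (a, b) ∂(μ.map A) = 0 := fun b =>
    horth (fun z => F (z, b)) (hF.comp (measurable_id.prodMk measurable_const)) ⟨K, fun z => hFK _⟩
  simp [this]

theorem noise_bound {W : Type} [MeasurableSpace W] (hΦc : Continuous Φ) {r : ℕ}
    (S : Fin r → Ω → W) (hS : ∀ i, Measurable (S i)) (hind : iIndepFun S μ)
    (π : W → D) (hπ : Measurable π) (ξ : W → ℝ) (hξ : Measurable ξ) (C : ℝ)
    (hξC : ∀ w, |ξ w| ≤ C)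
    (horth : ∀ i, ∀ ψ : D → ℝ, Measurable ψ → (∃ K, ∀ z, |ψ z| ≤ K) →
      ∫ w, ξ w * ψ (π w) ∂(μ.map (S i)) = 0)
    {c T : ℝ} (hc : 0 < c)
    (hT : ∫ ω, ∑ i, (gram (fun i => Φ (π (S i ω))) * rinv (fun i => Φ (π (S i ω))) c) i i ∂μ ≤ T) :
    Integrable (fun ω => (fun i => ξ (S i ω)) ⬝ᵥ (gram (fun i => Φ (π (S i ω))) *
      rinv (fun i => Φ (π (S i ω))) c).mulVec fun i => ξ (S i ω)) μ ∧
    ∫ ω, (fun i => ξ (S i ω)) ⬝ᵥ (gram (fun i => Φ (π (S i ω))) *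
      rinv (fun i => Φ (π (S i ω))) c).mulVec (fun i => ξ (S i ω)) ∂μ ≤ C ^ 2 * T := by
  have hzm : Measurable fun ω => fun i => π (S i ω) := measurable_pi_iff.2 fun i => hπ.comp (hS i)
  set E : (Fin r → D) → Fin r → Fin r → ℝ := fun z i j =>
    (gram (fun i => Φ (z i)) * rinv (fun i => Φ (z i)) c) i j with hE
  have hEm : ∀ i j, Measurable fun z => E z i j := fun i j =>
    (continuous_gram_rinv hΦc hc i j).measurable
  have hE2 : ∀ z i j, |E z i j| ≤ 2 := fun z i j => gram_rinv_entry _ hc i j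
  have hEmω : ∀ i j, Measurable fun ω => E (fun i => π (S i ω)) i j := fun i j =>
    (hEm i j).comp hzm
  have hW : (fun ω => (fun i => ξ (S i ω)) ⬝ᵥ (gram (fun i => Φ (π (S i ω))) *
      rinv (fun i => Φ (π (S i ω))) c).mulVec fun i => ξ (S i ω)) = fun ω =>
      ∑ i, ∑ j, ξ (S i ω) * (ξ (S j ω) * E (fun i => π (S i ω)) i j) := by
    funext ω
    simp only [dotProduct, Matrix.mulVec, Finset.mul_sum]
    refine Finset.sum_congr rfl fun i _ => Finset.sum_congr rfl fun j _ => ?_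
    simp only [hE]; ring
  have hbd : ∀ i j ω, |ξ (S i ω) * (ξ (S j ω) * E (fun i => π (S i ω)) i j)| ≤ C * (C * 2) := by
    intro i j ω
    have hC0 : 0 ≤ C := (abs_nonneg _).trans (hξC (S i ω))
    rw [abs_mul, abs_mul]
    gcongr
    · exact hξC _
    · exact hξC _
    · exact hE2 _ _ _
  have hI : ∀ i j, Integrable (fun ω => ξ (S i ω) * (ξ (S j ω) * E (fun i => π (S i ω)) i j)) μ :=
    fun i j => Integrable.of_bound
      ((hξ.comp (hS i)).mul ((hξ.comp (hS j)).mul (hEmω i j))).aestronglyMeasurable _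
      (Eventually.of_forall fun ω => hbd i j ω)
  have hoff : ∀ i j, j ≠ i →
      ∫ ω, ξ (S i ω) * (ξ (S j ω) * E (fun i => π (S i ω)) i j) ∂μ = 0 := by
    intro i j hij
    have hI2 := hind.indepFun_finset {i} {i}ᶜ (by simp) hS
    have hI3 : IndepFun (S i) (fun ω (l : (({i}ᶜ : Finset (Fin r)))) => S l ω) μ :=
      hI2.comp (φ := fun g : (({i} : Finset (Fin r)) → W) => g ⟨i, by simp⟩) (ψ := id)
        (measurable_pi_apply (⟨i, by simp⟩ : ({i} : Finset (Fin r)))) measurable_id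
    let vec : D × ((({i}ᶜ : Finset (Fin r))) → W) → Fin r → D := fun p l =>
      if h : l = i then p.1 else π (p.2 ⟨l, by simpa using h⟩)
    have hvec : Measurable vec := by
      refine measurable_pi_iff.2 fun l => ?_
      by_cases h : l = i
      · simp only [vec, h, dif_pos]; exact measurable_fst
      · simp only [vec, h, dif_neg, not_false_eq_true]
        exact hπ.comp ((measurable_pi_apply _).comp measurable_snd)
    have hj : j ∈ ({i}ᶜ : Finset (Fin r)) := by simpa using hij
    have := orth_indep (S i) (fun ω (l : (({i}ᶜ : Finset (Fin r)))) => S l ω) (hS i)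
      (measurable_pi_iff.2 fun l => hS l) hI3 π hπ ξ hξ C hξC (horth i)
      (fun p => ξ (p.2 ⟨j, hj⟩) * E (vec p) i j)
      ((hξ.comp ((measurable_pi_apply _).comp measurable_snd)).mul ((hEm i j).comp hvec))
      (C * 2) (fun p => by
        have hC0 : 0 ≤ C := (abs_nonneg _).trans (hξC (p.2 ⟨j, hj⟩))
        rw [abs_mul]
        gcongr
        · exact hξC _
        · exact hE2 _ _ _)
    rw [← this]
    refine integral_congr_ae (Eventually.of_forall fun ω => ?_)
    have hv : vec (π (S i ω), fun l : (({i}ᶜ : Finset (Fin r))) => S l ω)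
        = fun i => π (S i ω) := by
      funext l
      by_cases h : l = i
      · simp [vec, h]
      · simp [vec, h]
    simp only [hv]
  rw [hW]
  refine ⟨integrable_finsetSum _ fun i _ => integrable_finsetSum _ fun j _ => hI i j, ?_⟩
  rw [integral_finsetSum _ fun i _ => integrable_finsetSum _ fun j _ => hI i j]
  have hdI : ∀ i, Integrable (fun ω => E (fun i => π (S i ω)) i i) μ := fun i =>
    Integrable.of_bound (hEmω i i).aestronglyMeasurable 2 (Eventually.of_forall fun ω => hE2 _ i i)
  calc ∑ i, ∫ ω, ∑ j, ξ (S i ω) * (ξ (S j ω) * E (fun i => π (S i ω)) i j) ∂μ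
      = ∑ i, ∫ ω, ξ (S i ω) * (ξ (S i ω) * E (fun i => π (S i ω)) i i) ∂μ := by
        refine Finset.sum_congr rfl fun i _ => ?_
        rw [integral_finsetSum _ fun j _ => hI i j]
        exact Finset.sum_eq_single i (fun j _ hj => hoff i j hj) (by simp)
    _ ≤ ∑ i, ∫ ω, C ^ 2 * E (fun i => π (S i ω)) i i ∂μ := by
        refine Finset.sum_le_sum fun i _ => integral_mono (hI i i) ((hdI i).const_mul _) ?_
        intro ω
        have h0 : 0 ≤ E (fun i => π (S i ω)) i i := gram_rinv_diag _ hc i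
        have h1 : ξ (S i ω) ^ 2 ≤ C ^ 2 := sq_le_sq' (abs_le.1 (hξC (S i ω))).1 (abs_le.1 (hξC (S i ω))).2
        change ξ (S i ω) * (ξ (S i ω) * E (fun i => π (S i ω)) i i) ≤ C ^ 2 * E (fun i => π (S i ω)) i i
        rw [← mul_assoc, ← sq]
        gcongr
    _ = C ^ 2 * ∫ ω, ∑ i, E (fun i => π (S i ω)) i i ∂μ := by
        rw [integral_finsetSum _ fun i _ => hdI i, Finset.mul_sum]
        simp_rw [integral_const_mul]
    _ ≤ C ^ 2 * T := by gcongr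
end Trace

section Det
variable {H : Type} [NormedAddCommGroup H] [InnerProductSpace ℝ H]

/-- weights comparing the empirical mean over `n` with that over `r` samples. -/
def wt (n r : ℕ) (i : ℕ) : ℝ := (n : ℝ)⁻¹ - if i < r then (r : ℝ)⁻¹ else 0

theorem sum_lt (n r : ℕ) (hrn : r ≤ n) (g : ℕ → ℝ) :
    ∑ i : Fin n, (if (i : ℕ) < r then g i else 0) = ∑ i : Fin r, g i := by
  rw [Fin.sum_univ_eq_sum_range (fun i => if i < r then g i else 0) n,
    Fin.sum_univ_eq_sum_range g r, ← Finset.sum_filter]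
  congr 1
  ext i; simp; omega

theorem wt_sum (n r : ℕ) (hr : 0 < r) (hrn : r ≤ n) : ∑ i : Fin n, wt n r i = 0 := by
  have hr' : (r : ℝ) ≠ 0 := by positivity
  have hn' : (n : ℝ) ≠ 0 := by have : 0 < n := by omega
                               positivity
  simp only [wt, Finset.sum_sub_distrib]
  rw [sum_lt n r hrn (fun _ => (r : ℝ)⁻¹)]
  simp [hr', hn']

theorem wt_sq (n r : ℕ) (hr : 0 < r) (hrn : r ≤ n) : ∑ i : Fin n, wt n r i ^ 2 ≤ (r : ℝ)⁻¹ := by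
  have hr' : (r : ℝ) ≠ 0 := by positivity
  have hn' : (n : ℝ) ≠ 0 := by have : 0 < n := by omega
                               positivity
  have h : ∀ i : Fin n, wt n r i ^ 2 = ((n:ℝ)⁻¹) ^ 2 +
      (if (i:ℕ) < r then ((r : ℝ)⁻¹) ^ 2 - 2 * (n:ℝ)⁻¹ * (r:ℝ)⁻¹ else 0) := fun i => by
    unfold wt; split_ifs <;> ring
  simp_rw [h, Finset.sum_add_distrib]
  rw [sum_lt n r hrn (fun _ => ((r : ℝ)⁻¹) ^ 2 - 2 * (n:ℝ)⁻¹ * (r:ℝ)⁻¹)]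
  simp only [Finset.sum_const, Finset.card_univ, Fintype.card_fin, nsmul_eq_mul]
  have : (n:ℝ) * (n:ℝ)⁻¹ ^ 2 + r * ((r:ℝ)⁻¹ ^ 2 - 2 * (n:ℝ)⁻¹ * (r:ℝ)⁻¹)
    = (r:ℝ)⁻¹ - (n:ℝ)⁻¹ := by field_simp; ring
  rw [this]
  have : (0:ℝ) ≤ (n:ℝ)⁻¹ := by positivity
  linarith

/-- The comparison quantity. -/
def TT (Ψ : ℕ → H) (n r : ℕ) : ℝ :=
  ∑ i : Fin n, ∑ j : Fin n, wt n r i * wt n r j * ⟪Ψ i, Ψ j⟫ ^ 2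

theorem TT_nonneg (Ψ : ℕ → H) (n r : ℕ) : 0 ≤ TT Ψ n r := by
  by_cases h : ∃ i : Fin n, Ψ i ≠ 0
  · obtain ⟨i, hi⟩ := h
    have h1 := hs_bound (fun i : Fin n => Ψ i) (fun i => wt n r i) (Ψ i)
    have h2 : 0 < ‖Ψ i‖ ^ 4 := by positivity
    have h3 : 0 ≤ ‖Ψ i‖ ^ 4 * TT Ψ n r := le_trans (sq_nonneg _) h1
    exact nonneg_of_mul_nonneg_right h3 h2
  · push Not at h
    have : TT Ψ n r = 0 := by
      unfold TT
      exact Finset.sum_eq_zero fun i _ => Finset.sum_eq_zero fun j _ => by simp [h i]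
    exact this.ge

theorem det_bound (Ψ : ℕ → H) (n r : ℕ) (hr : 0 < r) (hrn : r ≤ n) {lam : ℝ} (hlam : 0 < lam)
    (u : H) (y ε : ℕ → ℝ) (hy : ∀ i, y i = ⟪u, Ψ i⟫ + ε i) (d : H)
    (hd : d = ∑ l : Fin r, (rinv (fun i : Fin r => Ψ i) (r * lam)).mulVec (fun i => y i) l • Ψ l - u)
    (V : ℝ) (hV : V = ‖u‖ ^ 2 + ((fun i : Fin r => ε i) ⬝ᵥ (gram (fun i : Fin r => Ψ i) *
      rinv (fun i : Fin r => Ψ i) (r * lam)).mulVec (fun i => ε i)) / (r * lam)) :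
    ‖u‖ ^ 2 ≤ V ∧ ‖d‖ ^ 2 ≤ 2 * V ∧
      (n : ℝ)⁻¹ * ∑ i ∈ Finset.range n, ⟪d, Ψ i⟫ ^ 2 ≤ 2 * lam * V + 2 * V * √(TT Ψ n r) := by
  have hr' : (0 : ℝ) < r := by positivity
  have hc : 0 < (r:ℝ) * lam := by positivity
  set c := (r:ℝ) * lam with hcdef
  set Φ : Fin r → H := fun i => Ψ i with hΦ
  set B := rinv Φ c with hB
  set W := (fun i : Fin r => ε i) ⬝ᵥ (gram Φ * B).mulVec (fun i => ε i) with hW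
  set p := u - ∑ l, B.mulVec (fun i => ⟪u, Φ i⟫) l • Φ l with hp
  set q := ∑ l, B.mulVec (fun i : Fin r => ε i) l • Φ l with hq
  have hdq : d = q - p := by
    rw [hd, hq, hp]
    have : (fun i : Fin r => y i) = (fun i => ⟪u, Φ i⟫) + fun i : Fin r => ε i := by
      funext i; simp [hy, hΦ]
    rw [this, Matrix.mulVec_add]
    simp only [Pi.add_apply, add_smul, Finset.sum_add_distrib]
    simp only [hΦ]
    abel
  have he : c * ‖q‖ ^ 2 + ∑ i, ⟪Φ i, q⟫ ^ 2 = W := energy_eq Φ hc _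
  obtain ⟨hb1, hb2⟩ := bias_bound Φ hc u
  have hS0 : 0 ≤ ∑ i, ⟪Φ i, q⟫ ^ 2 := Finset.sum_nonneg fun i _ => sq_nonneg _
  have hW0 : 0 ≤ W := by rw [← he]; positivity
  have hcV : c * V = c * ‖u‖ ^ 2 + W := by rw [hV]; field_simp
  have hVu : ‖u‖ ^ 2 ≤ V := by rw [hV]; have : 0 ≤ W / c := by positivity
                               linarith
  have hd2 : ‖d‖ ^ 2 ≤ 2 * V := by
    have h1 : ‖d‖ ^ 2 ≤ 2 * ‖q‖ ^ 2 + 2 * ‖p‖ ^ 2 := by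
      have h := norm_sub_le q p
      rw [← hdq] at h
      nlinarith [norm_nonneg d, norm_nonneg q, norm_nonneg p, sq_nonneg (‖q‖ - ‖p‖)]
    have h2 : c * ‖q‖ ^ 2 + c * ‖p‖ ^ 2 ≤ c * V := by
      rw [hcV]
      have := mul_le_mul_of_nonneg_left hb1 hc.le
      linarith
    have h3 : ‖q‖ ^ 2 + ‖p‖ ^ 2 ≤ V := by
      rw [← mul_add] at h2
      exact le_of_mul_le_mul_left h2 hc
    linarith
  refine ⟨hVu, hd2, ?_⟩
  have hsr : ∑ i : Fin r, ⟪d, Ψ i⟫ ^ 2 ≤ 2 * c * V := by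
    have h1 : ∀ i : Fin r, ⟪d, Ψ i⟫ ^ 2 ≤ 2 * ⟪Φ i, q⟫ ^ 2 + 2 * ⟪p, Φ i⟫ ^ 2 := fun i => by
      rw [hdq, inner_sub_left, real_inner_comm]
      change (⟪Φ i, q⟫ - ⟪p, Φ i⟫) ^ 2 ≤ _
      nlinarith [sq_nonneg (⟪Φ i, q⟫ + ⟪p, Φ i⟫)]
    calc _ ≤ ∑ i : Fin r, (2 * ⟪Φ i, q⟫ ^ 2 + 2 * ⟪p, Φ i⟫ ^ 2) := Finset.sum_le_sum fun i _ => h1 i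
      _ = 2 * ∑ i : Fin r, ⟪Φ i, q⟫ ^ 2 + 2 * ∑ i : Fin r, ⟪p, Φ i⟫ ^ 2 := by
          rw [Finset.sum_add_distrib, Finset.mul_sum, Finset.mul_sum]
      _ ≤ 2 * c * V := by
          have : 0 ≤ c * ‖q‖ ^ 2 := by positivity
          rw [mul_assoc, hcV]; linarith
  have hT := TT_nonneg Ψ n r
  have hhs : ∑ i : Fin n, wt n r i * ⟪d, Ψ i⟫ ^ 2 ≤ ‖d‖ ^ 2 * √(TT Ψ n r) := by
    have h1 := hs_bound (fun i : Fin n => Ψ i) (fun i => wt n r i) d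
    refine (le_abs_self _).trans (abs_le_of_sq_le_sq ?_ (by positivity))
    rw [mul_pow, Real.sq_sqrt hT, ← pow_mul]
    exact h1
  have hsplit : (n : ℝ)⁻¹ * ∑ i ∈ Finset.range n, ⟪d, Ψ i⟫ ^ 2
      = ∑ i : Fin n, wt n r i * ⟪d, Ψ i⟫ ^ 2 + (r:ℝ)⁻¹ * ∑ i : Fin r, ⟪d, Ψ i⟫ ^ 2 := by
    rw [← Fin.sum_univ_eq_sum_range (fun i => ⟪d, Ψ i⟫ ^ 2) n,
      ← sum_lt n r hrn (fun i => ⟪d, Ψ i⟫ ^ 2), Finset.mul_sum, Finset.mul_sum,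
      ← Finset.sum_add_distrib]
    refine Finset.sum_congr rfl fun i _ => ?_
    unfold wt
    split_ifs <;> ring
  rw [hsplit]
  have h5 : (r:ℝ)⁻¹ * ∑ i : Fin r, ⟪d, Ψ i⟫ ^ 2 ≤ 2 * lam * V := by
    calc _ ≤ (r:ℝ)⁻¹ * (2 * c * V) := by gcongr
      _ = _ := by rw [hcdef]; field_simp
  have h6 : ‖d‖ ^ 2 * √(TT Ψ n r) ≤ 2 * V * √(TT Ψ n r) := by gcongr
  linarith
end Det

section Prob
variable {D : Type} [TopologicalSpace D] [SecondCountableTopology D] [MeasurableSpace D]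
  [BorelSpace D] {H : Type} [NormedAddCommGroup H] [InnerProductSpace ℝ H]
  {Φ : D → H} {M : ℝ} {ν : Measure D} [IsProbabilityMeasure ν]
  {Ω : Type} [MeasurableSpace Ω] {μ : Measure Ω} [IsProbabilityMeasure μ]

theorem TT_int (hΦc : Continuous Φ) (hM : ∀ z, ‖Φ z‖ ≤ M) (zs : ℕ → Ω → D)
    (hzs : ∀ i, Measurable (zs i)) (hlaw : ∀ i, μ.map (zs i) = ν)
    (hind : Pairwise fun i j => IndepFun (zs i) (zs j) μ) (n r : ℕ) (hr : 0 < r) (hrn : r ≤ n) :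
    Integrable (fun ω => TT (fun i => Φ (zs i ω)) n r) μ ∧
    ∫ ω, TT (fun i => Φ (zs i ω)) n r ∂μ ≤ M ^ 4 * (r:ℝ)⁻¹ := by
  let g : D × D → ℝ := fun p => ⟪Φ p.1, Φ p.2⟫ ^ 2
  have hgc : Continuous g := by fun_prop
  have hgm : Measurable g := hgc.measurable
  have hg : ∀ p, |g p| ≤ M ^ 4 := fun p => by
    have hM0 : 0 ≤ M := (norm_nonneg _).trans (hM p.1)
    have h : |⟪Φ p.1, Φ p.2⟫| ≤ M * M := (abs_real_inner_le_norm _ _).trans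
      (by gcongr <;> exact hM _)
    simp only [g, abs_pow]
    calc _ ≤ (M * M) ^ 2 := by gcongr
      _ = _ := by ring
  have hI : ∀ i j, Integrable (fun ω => g (zs i ω, zs j ω)) μ := fun i j =>
    Integrable.of_bound (hgm.comp ((hzs i).prodMk (hzs j))).aestronglyMeasurable (M ^ 4)
      (Eventually.of_forall fun ω => hg _)
  set a := ∫ p, g p ∂(ν.prod ν) with ha
  have ha0 : 0 ≤ a := integral_nonneg fun p => sq_nonneg _
  have hoff : ∀ i j, i ≠ j → ∫ ω, g (zs i ω, zs j ω) ∂μ = a := fun i j hij => by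
    have hmap := (indepFun_iff_map_prod_eq_prod_map_map (hzs i).aemeasurable
      (hzs j).aemeasurable).1 (hind hij)
    rw [hlaw, hlaw] at hmap
    rw [ha, ← hmap, integral_map ((hzs i).prodMk (hzs j)).aemeasurable hgm.aestronglyMeasurable]
  have hdiag : ∀ i, ∫ ω, g (zs i ω, zs i ω) ∂μ ≤ M ^ 4 := fun i => by
    calc _ ≤ ∫ _, M ^ 4 ∂μ := integral_mono (hI i i) (integrable_const _)
          fun ω => (le_abs_self _).trans (hg _)
      _ = _ := by simp
  have hI2 : ∀ i j : Fin n, Integrable (fun ω => wt n r i * wt n r j * g (zs i ω, zs j ω)) μ :=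
    fun i j => (hI i j).const_mul _
  refine ⟨integrable_finsetSum _ fun i _ => integrable_finsetSum _ fun j _ => hI2 i j, ?_⟩
  have h1 : ∫ ω, TT (fun i => Φ (zs i ω)) n r ∂μ
      = ∑ i : Fin n, ∑ j : Fin n, wt n r i * wt n r j * ∫ ω, g (zs i ω, zs j ω) ∂μ := by
    unfold TT
    rw [integral_finsetSum _ fun i _ => integrable_finsetSum _ fun j _ => hI2 i j]
    refine Finset.sum_congr rfl fun i _ => ?_
    rw [integral_finsetSum _ fun j _ => hI2 i j]
    refine Finset.sum_congr rfl fun j _ => ?_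
    exact integral_const_mul _ _
  have h2 : ∑ i : Fin n, ∑ j : Fin n, wt n r i * wt n r j * ∫ ω, g (zs i ω, zs j ω) ∂μ
      ≤ ∑ i : Fin n, ∑ j : Fin n, (wt n r i * wt n r j * a +
        if i = j then wt n r i ^ 2 * M ^ 4 else 0) := by
    refine Finset.sum_le_sum fun i _ => Finset.sum_le_sum fun j _ => ?_
    by_cases hij : i = j
    · subst hij
      simp only [if_true]
      have h3 := mul_le_mul_of_nonneg_left (hdiag i) (sq_nonneg (wt n r i))
      have h4 : 0 ≤ wt n r i ^ 2 * a := by positivity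
      nlinarith
    · rw [hoff i j (fun h => hij (Fin.ext h))]
      simp [hij]
  have h3 : ∑ i : Fin n, ∑ j : Fin n, (wt n r i * wt n r j * a +
        if i = j then wt n r i ^ 2 * M ^ 4 else 0) = M ^ 4 * ∑ i : Fin n, wt n r i ^ 2 := by
    simp only [Finset.sum_add_distrib, Finset.sum_ite_eq, Finset.mem_univ, if_true]
    have : ∑ i : Fin n, ∑ j : Fin n, wt n r i * wt n r j * a
        = (∑ i : Fin n, wt n r i) * (∑ j : Fin n, wt n r j) * a := by
      rw [Finset.sum_mul_sum, Finset.sum_mul]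
      simp_rw [Finset.sum_mul]
    rw [this, wt_sum n r hr hrn, zero_mul, zero_mul, zero_add, Finset.mul_sum]
    exact Finset.sum_congr rfl fun i _ => mul_comm _ _
  rw [h1]
  refine h2.trans (h3.le.trans ?_)
  have : (0:ℝ) ≤ M ^ 4 := by positivity
  gcongr
  exact wt_sq n r hr hrn

theorem rls_eq {k : D → D → ℝ} (hk : ∀ z z', ⟪Φ z, Φ z'⟫ = k z z') (zs : ℕ → D) (y : ℕ → ℝ)
    (r : ℕ) (lam : ℝ) (z : D) : rls k zs y r lam z =
      ⟪∑ l : Fin r, (rinv (fun i : Fin r => Φ (zs i)) (r * lam)).mulVec (fun i => y i) l •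
        Φ (zs l), Φ z⟫ := by
  unfold rls
  simp only [sum_inner, real_inner_smul_left, hk]
  have : rinv (fun i : Fin r => Φ (zs i)) (r * lam) =
    ((Matrix.of fun i l : Fin r => k (zs i) (zs l)) +
        ((r : ℝ) * lam) • (1 : Matrix (Fin r) (Fin r) ℝ))⁻¹ := by
    unfold rinv gram
    simp only [hk]
  rw [this]

theorem regression [CompleteSpace H] (hΦc : Continuous Φ) (hM : ∀ z, ‖Φ z‖ ≤ M)
    {k : D → D → ℝ} (hk : ∀ z z', ⟪Φ z, Φ z'⟫ = k z z')
    (L : Lp ℝ 2 ν →L[ℝ] Lp ℝ 2 ν)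
    (hL : ∀ g : Lp ℝ 2 ν, (L g : D → ℝ) =ᵐ[ν] fun z => ∫ z', k z z' * g z' ∂ν)
    (Q γ : ℝ) (hγ0 : 0 ≤ γ) (hA2 : TraceAssumption ν L Q γ)
    (β : ℝ) (hβ1 : 1 < β) (P : Lp ℝ 2 ν →L[ℝ] Lp ℝ 2 ν)
    (hP : IsFracPower L (β / 2) P) (f : D → ℝ) (hf : MemLp f 2 ν)
    (hfr : hf.toLp f ∈ Set.range ⇑P)
    {W : Type} [MeasurableSpace W] (S : ℕ → Ω → W) (hS : ∀ i, Measurable (S i))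
    (hind : iIndepFun S μ) (π : W → D) (hπ : Measurable π)
    (hlaw : ∀ i, μ.map (fun ω => π (S i ω)) = ν)
    (φ : W → ℝ) (hφ : Measurable φ) (C : ℝ) (hφC : ∀ w, |φ w| ≤ C)
    (horth : ∀ i, ∀ ψ : D → ℝ, Measurable ψ → (∃ K, ∀ z, |ψ z| ≤ K) →
      ∫ w, (φ w - f (π w)) * ψ (π w) ∂(μ.map (S i)) = 0)
    (rn : ℕ → ℕ) (hrn : ∀ n, rn n ≤ n) (hrt : Tendsto rn atTop atTop) :
    (∃ Cf, ∀ᵐ z ∂ν, |f z| ≤ Cf) ∧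
    ∀ η : ℝ, 0 < η → ∃ R : ℝ, ∀ ε : ℝ, 0 < ε → ∀ᶠ n in atTop,
      μ.real {ω | (∃ i < n, R < |rls k (fun l => π (S l ω)) (fun l => φ (S l ω)) (rn n)
          ((rn n : ℝ) ^ (-(1 / (1 + γ)))) (π (S i ω)) - f (π (S i ω))|) ∨
        ε ≤ (n : ℝ)⁻¹ * ∑ i ∈ Finset.range n, (rls k (fun l => π (S l ω)) (fun l => φ (S l ω)) (rn n)
          ((rn n : ℝ) ^ (-(1 / (1 + γ)))) (π (S i ω)) - f (π (S i ω))) ^ 2} ≤ η := by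
  obtain ⟨κ, hκ, v, σ, u, hv, ⟨G, hG, hexp⟩, hσ, hInteg, htr, hfu⟩ := mercer hΦc hM L
    (fun g => by simp only [hk]; exact hL g) Q γ hA2 β hβ1 P hP f hf hfr
  have hzS : ∀ i, Measurable fun ω => π (S i ω) := fun i => hπ.comp (hS i)
  have hM0 : 0 ≤ M := by
    have : Nonempty D := (inferInstance : NeZero ν).out |> fun h => by
      by_contra hne
      rw [not_nonempty_iff] at hne
      exact h (Measure.eq_zero_of_isEmpty ν)
    exact (norm_nonneg _).trans (hM (Classical.arbitrary D))
  have hub : ∀ z, |⟪u, Φ z⟫| ≤ ‖u‖ * M := fun z =>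
    (abs_real_inner_le_norm _ _).trans (by gcongr; exact hM z)
  refine ⟨⟨‖u‖ * M, by filter_upwards [hfu] with z hz; rw [hz]; exact hub z⟩, ?_⟩
  have hfS : ∀ i, ∀ᵐ ω ∂μ, f (π (S i ω)) = ⟪u, Φ (π (S i ω))⟫ := fun i => by
    refine ae_of_ae_map (hzS i).aemeasurable (p := fun z => f z = ⟪u, Φ z⟫) ?_
    rw [hlaw i]; exact hfu
  have hfall : ∀ᵐ ω ∂μ, ∀ i, f (π (S i ω)) = ⟪u, Φ (π (S i ω))⟫ := ae_all_iff.2 hfS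
  let ξ : W → ℝ := fun w => φ w - ⟪u, Φ (π w)⟫
  have hξ : Measurable ξ := by
    refine hφ.sub ?_
    exact (by fun_prop : Continuous fun z => ⟪u, Φ z⟫).measurable.comp hπ
  set C' := C + ‖u‖ * M with hC'
  have hξC : ∀ w, |ξ w| ≤ C' := fun w => (abs_sub _ _).trans (add_le_add (hφC w) (hub _))
  have hξorth : ∀ i, ∀ ψ : D → ℝ, Measurable ψ → (∃ K, ∀ z, |ψ z| ≤ K) →
      ∫ w, ξ w * ψ (π w) ∂(μ.map (S i)) = 0 := fun i ψ hψ hb => by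
    rw [← horth i ψ hψ hb]
    refine integral_congr_ae ?_
    have : ∀ᵐ w ∂(μ.map (S i)), f (π w) = ⟪u, Φ (π w)⟫ := by
      refine ae_of_ae_map hπ.aemeasurable (p := fun z => f z = ⟪u, Φ z⟫) ?_
      rw [Measure.map_map hπ (hS i)]
      have := hlaw i
      simp only [Function.comp_def]
      rw [this]; exact hfu
    filter_upwards [this] with w hw
    simp only [ξ, hw]
  set lam : ℕ → ℝ := fun n => (rn n : ℝ) ^ (-(1 / (1 + γ))) with hlamdef
  let Wn : ℕ → Ω → ℝ := fun n ω => (fun i : Fin (rn n) => ξ (S i ω)) ⬝ᵥ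
    (gram (fun i : Fin (rn n) => Φ (π (S i ω))) *
      rinv (fun i : Fin (rn n) => Φ (π (S i ω))) (rn n * lam n)).mulVec (fun i => ξ (S i ω))
  let V : ℕ → Ω → ℝ := fun n ω => ‖u‖ ^ 2 + Wn n ω / (rn n * lam n)
  let d : ℕ → Ω → H := fun n ω => ∑ l : Fin (rn n), (rinv (fun i : Fin (rn n) => Φ (π (S i ω)))
    (rn n * lam n)).mulVec (fun i => φ (S i ω)) l • Φ (π (S l ω)) - u
  let T : ℕ → Ω → ℝ := fun n ω => TT (fun i => Φ (π (S i ω))) n (rn n)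
  set E0 := ‖u‖ ^ 2 + C' ^ 2 * Q with hE0
  have hlampos : ∀ n, 0 < rn n → 0 < lam n := fun n h =>
    Real.rpow_pos_of_pos (by exact_mod_cast h) _
  have hdet : ∀ n ω, 0 < rn n → ‖u‖ ^ 2 ≤ V n ω ∧ ‖d n ω‖ ^ 2 ≤ 2 * V n ω ∧
      (n : ℝ)⁻¹ * ∑ i ∈ Finset.range n, ⟪d n ω, Φ (π (S i ω))⟫ ^ 2 ≤
        2 * lam n * V n ω + 2 * V n ω * √(T n ω) := fun n ω hr =>
    det_bound (fun i => Φ (π (S i ω))) n (rn n) hr (hrn n) (hlampos n hr) u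
      (fun i => φ (S i ω)) (fun i => ξ (S i ω)) (fun i => by simp [ξ]) (d n ω) rfl (V n ω) rfl
  have hV : ∀ n, 0 < rn n → Integrable (V n) μ ∧ ∫ ω, V n ω ∂μ ≤ E0 := fun n hr => by
    have hl := hlampos n hr
    have hr' : (0:ℝ) < rn n := by exact_mod_cast hr
    have hc : 0 < (rn n:ℝ) * lam n := by positivity
    obtain ⟨hs1, hs2⟩ := htr (lam n) hl
    have h1 := trace_bound (μ := μ) hΦc hM v σ hv G hG hexp hσ hInteg hl hs1 hs2 hr
      (fun i : Fin (rn n) => fun ω => π (S i ω)) (fun i => hzS i) (fun i => hlaw i)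
    obtain ⟨h2, h3⟩ := noise_bound hΦc (fun i : Fin (rn n) => S i) (fun i => hS i)
      (hind.precomp (g := fun i : Fin (rn n) => (i : ℕ)) Fin.val_injective) π hπ ξ hξ C' hξC
      (fun i => hξorth i) hc h1
    refine ⟨(integrable_const _).add (h2.div_const _), ?_⟩
    have h4 : ∫ ω, V n ω ∂μ = ‖u‖ ^ 2 + (∫ ω, Wn n ω ∂μ) / (rn n * lam n) := by
      change ∫ ω, (‖u‖ ^ 2 + Wn n ω / (rn n * lam n)) ∂μ = _
      rw [integral_add (integrable_const _) (h2.div_const _), integral_div, integral_const,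
        probReal_univ, one_smul]
    have h5 : lam n ^ (-γ) = rn n * lam n := by
      simp only [hlamdef]
      rw [← Real.rpow_mul hr'.le]
      nth_rewrite 2 [← Real.rpow_one (rn n : ℝ)]
      rw [← Real.rpow_add hr']
      congr 1
      have : 1 + γ ≠ 0 := by positivity
      field_simp
      ring
    rw [h4, hE0]
    gcongr
    rw [div_le_iff₀ hc]
    refine h3.trans (le_of_eq ?_)
    rw [h5]; ring
  have hTI : ∀ n, 0 < rn n → Integrable (T n) μ ∧ ∫ ω, T n ω ∂μ ≤ M ^ 4 * (rn n : ℝ)⁻¹ :=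
    fun n hr => TT_int hΦc hM (fun i ω => π (S i ω)) hzS hlaw
      (fun i j hij => (hind.indepFun hij).comp hπ hπ) n (rn n) hr (hrn n)
  have hlam0 : Tendsto lam atTop (𝓝 0) := by
    have h1 : Tendsto (fun x : ℝ => x ^ (-(1 / (1 + γ)))) atTop (𝓝 0) :=
      tendsto_rpow_neg_atTop (by positivity)
    exact h1.comp (tendsto_natCast_atTop_atTop.comp hrt)
  have hrinv : Tendsto (fun n => (rn n : ℝ)⁻¹) atTop (𝓝 0) :=
    tendsto_inv_atTop_zero.comp (tendsto_natCast_atTop_atTop.comp hrt)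
  intro η hη
  -- threshold for V
  set vv := 2 * (|E0| + 1) / η with hvv
  have hvv0 : 0 < vv := by positivity
  refine ⟨√(2 * vv) * M, fun ε hε => ?_⟩
  obtain ⟨τ, hτ0, hτ⟩ : ∃ τ : ℝ, 0 < τ ∧ 2 * vv * √τ ≤ ε / 4 := by
    refine ⟨(ε / (8 * vv)) ^ 2, by positivity, ?_⟩
    rw [Real.sqrt_sq (by positivity)]
    apply le_of_eq; field_simp; norm_num
  have hl : ∀ᶠ n in atTop, lam n < ε / (8 * vv) := hlam0.eventually_lt_const (by positivity)
  have hr2 : ∀ᶠ n in atTop, M ^ 4 * (rn n : ℝ)⁻¹ < τ * η / 2 := by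
    have := hrinv.const_mul (M ^ 4)
    rw [mul_zero] at this
    exact this.eventually_lt_const (by positivity)
  have hr1 : ∀ᶠ n in atTop, 0 < rn n := hrt.eventually_gt_atTop 0
  filter_upwards [hl, hr2, hr1] with n hl hr2 hr1
  have hVn : μ.real {ω | vv ≤ V n ω} ≤ η / 2 := by
    have h := mul_meas_ge_le_integral_of_nonneg (μ := μ) (f := V n)
      (Eventually.of_forall fun ω => (sq_nonneg _).trans (hdet n ω hr1).1) (hV n hr1).1 vv
    have h2 := h.trans (hV n hr1).2
    have h3 : E0 ≤ vv * (η / 2) := by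
      have : vv * (η / 2) = |E0| + 1 := by rw [hvv]; field_simp
      rw [this]; linarith [le_abs_self E0]
    exact le_of_mul_le_mul_left (h2.trans h3) hvv0
  have hTn : μ.real {ω | τ ≤ T n ω} ≤ η / 2 := by
    have h := mul_meas_ge_le_integral_of_nonneg (μ := μ) (f := T n)
      (Eventually.of_forall fun ω => TT_nonneg _ _ _) (hTI n hr1).1 τ
    have h2 := h.trans (hTI n hr1).2
    have h3 : M ^ 4 * (rn n : ℝ)⁻¹ ≤ τ * (η / 2) := by linarith
    exact le_of_mul_le_mul_left (h2.trans h3) hτ0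
  have hsub : μ.real {ω | (∃ i < n, √(2 * vv) * M < |rls k (fun l => π (S l ω)) (fun l => φ (S l ω)) (rn n)
          (lam n) (π (S i ω)) - f (π (S i ω))|) ∨
        ε ≤ (n : ℝ)⁻¹ * ∑ i ∈ Finset.range n, (rls k (fun l => π (S l ω)) (fun l => φ (S l ω)) (rn n)
          (lam n) (π (S i ω)) - f (π (S i ω))) ^ 2} ≤
      μ.real ({ω | vv ≤ V n ω} ∪ {ω | τ ≤ T n ω}) := by
    refine ENNReal.toReal_mono (measure_ne_top _ _) (measure_mono_ae ?_)
    filter_upwards [hfall] with ω hω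
    intro hmem
    by_contra hcon
    have hc1 : V n ω < vv := not_le.1 fun h => hcon (Or.inl h)
    have hc2 : T n ω < τ := not_le.1 fun h => hcon (Or.inr h)
    obtain ⟨hd0, hd1, hd2⟩ := hdet n ω hr1
    have hdi : ∀ i, rls k (fun l => π (S l ω)) (fun l => φ (S l ω)) (rn n)
          (lam n) (π (S i ω)) - f (π (S i ω)) = ⟪d n ω, Φ (π (S i ω))⟫ := fun i => by
      rw [rls_eq hk, hω i, ← inner_sub_left]
    have hV0 : 0 ≤ V n ω := (sq_nonneg _).trans hd0
    rcases hmem with ⟨i, -, hi⟩ | hi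
    · rw [hdi] at hi
      have h1 : |⟪d n ω, Φ (π (S i ω))⟫| ≤ √(2 * vv) * M := by
        refine (abs_real_inner_le_norm _ _).trans ?_
        gcongr
        · refine Real.le_sqrt_of_sq_le ?_
          linarith
        · exact hM _
      linarith
    · simp only [hdi] at hi
      have h1 : 2 * lam n * V n ω ≤ ε / 4 := by
        calc 2 * lam n * V n ω ≤ 2 * (ε / (8 * vv)) * vv := by
              have := (hlampos n hr1).le
              gcongr
          _ = ε / 4 := by field_simp; norm_num
      have h2 : 2 * V n ω * √(T n ω) ≤ ε / 4 := by
        refine le_trans ?_ hτ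
        gcongr
      linarith
  refine hsub.trans ((measureReal_union_le _ _).trans ?_)
  linarith
end Prob

section Kern
variable {DX DY : Type} [MeasurableSpace DX] [MeasurableSpace DY]
    [NormedAddCommGroup DX] [NormedSpace ℝ DX] [NormedAddCommGroup DY] [NormedSpace ℝ DY]

theorem kernel_reg [MeasurableSingletonClass (DX × DY)] [Nontrivial (DX × DY)]
    (kX : DX → DX → ℝ) (kY : DY → DY → ℝ) (hk : Assumption1 kX kY) :
    (∃ C, ∀ t, Continuous (kX t) ∧ ∀ x, |kX t x| ≤ C) ∧
    (∃ C, ∀ t, Continuous (kY t) ∧ ∀ x, |kY t x| ≤ C) := by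
  obtain ⟨p, q, hpq⟩ : ∃ p q : DX × DY, kX p.1 q.1 * kY p.2 q.2 ≠ 0 := by
    by_contra hcon
    push Not at hcon
    obtain ⟨a, b, hab⟩ := exists_pair_ne (DX × DY)
    have h := hk.charac (Measure.dirac a) (Measure.dirac b) inferInstance inferInstance
      (fun t => by simp [meanEmbed, hcon])
    have h2 := congrArg (fun m : Measure (DX × DY) => m {a}) h
    simp [hab.symm] at h2
  obtain ⟨C, hC⟩ := hk.bounded
  have hX : kX p.1 q.1 ≠ 0 := left_ne_zero_of_mul hpq
  have hY : kY p.2 q.2 ≠ 0 := right_ne_zero_of_mul hpq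
  refine ⟨⟨C / |kY p.2 q.2|, fun t => ⟨?_, fun x => ?_⟩⟩, ⟨C / |kX p.1 q.1|, fun t => ⟨?_, fun x => ?_⟩⟩⟩
  · have h1 : Continuous fun x : DX => kX t x * kY p.2 q.2 :=
      hk.continuous.comp (f := fun x : DX => (((t, p.2), (x, q.2)) : (DX × DY) × (DX × DY)))
        (by fun_prop)
    have h2 := h1.div_const (kY p.2 q.2)
    simpa [hY] using h2
  · rw [le_div_iff₀ (abs_pos.2 hY), ← abs_mul]
    exact hC (t, p.2) (x, q.2)
  · have h1 : Continuous fun x : DY => kX p.1 q.1 * kY t x :=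
      hk.continuous.comp (f := fun x : DY => (((p.1, t), (q.1, x)) : (DX × DY) × (DX × DY)))
        (by fun_prop)
    have h2 := h1.div_const (kX p.1 q.1)
    simpa [hX, mul_comm, mul_div_assoc] using h2
  · rw [le_div_iff₀ (abs_pos.2 hX), ← abs_mul, mul_comm]
    exact hC (p.1, t) (q.1, x)
end Kern

section Comb
variable {Ω : Type} [MeasurableSpace Ω] {μ : Measure Ω} [IsProbabilityMeasure μ]

theorem condExp_orth {D : Type} [MeasurableSpace D] (Z : Ω → D) (hZ : Measurable Z)
    (g : Ω → ℝ) (hg : Integrable g μ) (f : D → ℝ)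
    (hf : (fun ω => f (Z ω)) =ᵐ[μ] μ[g | MeasurableSpace.comap Z inferInstance])
    (ψ : D → ℝ) (hψ : Measurable ψ) (hb : ∃ K, ∀ z, |ψ z| ≤ K) :
    ∫ ω, (g ω - f (Z ω)) * ψ (Z ω) ∂μ = 0 := by
  obtain ⟨K, hK⟩ := hb
  have hm : MeasurableSpace.comap Z inferInstance ≤ (inferInstance : MeasurableSpace Ω) :=
    hZ.comap_le
  have hψm : StronglyMeasurable[MeasurableSpace.comap Z inferInstance] fun ω => ψ (Z ω) :=
    (hψ.comp (comap_measurable Z)).stronglyMeasurable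
  have hψm' : AEStronglyMeasurable (fun ω => ψ (Z ω)) μ := (hψ.comp hZ).aestronglyMeasurable
  have hi1 : Integrable (fun ω => ψ (Z ω) * g ω) μ :=
    hg.bdd_mul hψm' (c := K) (Eventually.of_forall fun ω => hK _)
  have hi2 : Integrable (fun ω => ψ (Z ω) *
      (μ[g | MeasurableSpace.comap Z inferInstance]) ω) μ :=
    integrable_condExp.bdd_mul hψm' (c := K) (Eventually.of_forall fun ω => hK _)
  have h1 := condExp_mul_of_stronglyMeasurable_left (μ := μ) hψm hi1 hg
  calc ∫ ω, (g ω - f (Z ω)) * ψ (Z ω) ∂μ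
      = ∫ ω, (ψ (Z ω) * g ω - ψ (Z ω) * (μ[g | MeasurableSpace.comap Z inferInstance]) ω) ∂μ := by
        refine integral_congr_ae ?_
        filter_upwards [hf] with ω hω
        rw [hω]; ring
    _ = ∫ ω, ψ (Z ω) * g ω ∂μ - ∫ ω, ψ (Z ω) *
        (μ[g | MeasurableSpace.comap Z inferInstance]) ω ∂μ := integral_sub hi1 hi2
    _ = 0 := by
        rw [sub_eq_zero, ← integral_condExp hm]
        exact integral_congr_ae h1

/-- Small array: uniformly bounded with high probability and quadratic mean tending to zero. -/
def Small (μ : Measure Ω) (d : ℕ → ℕ → Ω → ℝ) : Prop :=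
  ∀ η : ℝ, 0 < η → ∃ R : ℝ, ∀ ε : ℝ, 0 < ε → ∀ᶠ n in atTop,
      μ.real {ω | (∃ i < n, R < |d n i ω|) ∨
        ε ≤ (n : ℝ)⁻¹ * ∑ i ∈ Finset.range n, d n i ω ^ 2} ≤ η

theorem prod_diff {a b a' b' d1 d2 d3 d4 C : ℝ} (ha : |a| ≤ C) (hb : |b| ≤ C) (ha' : |a'| ≤ C)
    (hb' : |b'| ≤ C) (h1 : |d1| ≤ C) (h2 : |d2| ≤ C) (h3 : |d3| ≤ C) (h4 : |d4| ≤ C) :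
    |(a - d1) * (b - d2) * ((a' - d3) * (b' - d4)) - a * b * (a' * b')| ≤
      (2 * C) ^ 3 * (|d1| + |d2| + |d3| + |d4|) := by
  have hC : 0 ≤ C := (abs_nonneg _).trans ha
  have e1 : ∀ x d : ℝ, |x| ≤ C → |d| ≤ C → |x - d| ≤ 2 * C := fun x d hx hd =>
    (abs_sub _ _).trans (by linarith)
  have hA : |a| ≤ 2 * C := by linarith
  have hB : |b| ≤ 2 * C := by linarith
  have hA' : |a'| ≤ 2 * C := by linarith
  have hid : (a - d1) * (b - d2) * ((a' - d3) * (b' - d4)) - a * b * (a' * b')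
    = -(d1 * ((b - d2) * (a' - d3) * (b' - d4)) + d2 * (a * (a' - d3) * (b' - d4))
      + d3 * (a * b * (b' - d4)) + d4 * (a * b * a')) := by ring
  have key : ∀ d x y z : ℝ, |x| ≤ 2 * C → |y| ≤ 2 * C → |z| ≤ 2 * C →
      |d * (x * y * z)| ≤ |d| * (2 * C) ^ 3 := fun d x y z hx hy hz => by
    rw [abs_mul, abs_mul, abs_mul]
    calc |d| * (|x| * |y| * |z|) ≤ |d| * (2 * C * (2 * C) * (2 * C)) := by gcongr
      _ = _ := by ring
  rw [hid, abs_neg]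
  have k1 := key d1 _ _ _ (e1 b d2 hb h2) (e1 a' d3 ha' h3) (e1 b' d4 hb' h4)
  have k2 := key d2 _ _ _ hA (e1 a' d3 ha' h3) (e1 b' d4 hb' h4)
  have k3 := key d3 _ _ _ hA hB (e1 b' d4 hb' h4)
  have k4 := key d4 _ _ _ hA hB hA'
  refine (abs_add_le _ _).trans ?_
  refine (add_le_add ((abs_add_le _ _).trans (add_le_add (abs_add_le _ _) le_rfl)) le_rfl).trans ?_
  linarith

theorem mean_abs {n : ℕ} (d : ℕ → ℝ) {s : ℝ} (hs : 0 < s) (hn : 0 < n)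
    (h : (n : ℝ)⁻¹ * ∑ i ∈ Finset.range n, d i ^ 2 < s ^ 2) :
    (n : ℝ)⁻¹ * ∑ i ∈ Finset.range n, |d i| ≤ s := by
  have hn' : (0:ℝ) < n := by exact_mod_cast hn
  have h1 : ∀ i, |d i| ≤ s / 2 + d i ^ 2 / (2 * s) := fun i => by
    rw [← sq_abs (d i), div_add_div _ _ (by norm_num) (by positivity), le_div_iff₀ (by positivity)]
    nlinarith [sq_nonneg (|d i| - s)]
  calc (n : ℝ)⁻¹ * ∑ i ∈ Finset.range n, |d i|
      ≤ (n : ℝ)⁻¹ * ∑ i ∈ Finset.range n, (s / 2 + d i ^ 2 / (2 * s)) := by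
        gcongr with i; exact h1 i
    _ = s / 2 + ((n : ℝ)⁻¹ * ∑ i ∈ Finset.range n, d i ^ 2) / (2 * s) := by
        rw [Finset.sum_add_distrib, ← Finset.sum_div (Finset.range n) (fun i => d i ^ 2) (2 * s)]
        simp only [Finset.sum_const, Finset.card_range, nsmul_eq_mul]
        field_simp
    _ ≤ s / 2 + s ^ 2 / (2 * s) := by gcongr
    _ = s := by field_simp; norm_num

theorem combine (a b a' b' : ℕ → Ω → ℝ) (d1 d2 d3 d4 : ℕ → ℕ → Ω → ℝ) (C : ℝ)
    (ha : ∀ᵐ ω ∂μ, ∀ i, |a i ω| ≤ C) (hb : ∀ᵐ ω ∂μ, ∀ i, |b i ω| ≤ C)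
    (ha' : ∀ᵐ ω ∂μ, ∀ i, |a' i ω| ≤ C) (hb' : ∀ᵐ ω ∂μ, ∀ i, |b' i ω| ≤ C)
    (h1 : Small μ d1) (h2 : Small μ d2) (h3 : Small μ d3) (h4 : Small μ d4)
    (m : ℝ) (hlln : ∀ ε : ℝ, 0 < ε → Tendsto (fun n : ℕ => μ.real {ω | ε ≤
      |(n : ℝ)⁻¹ * ∑ i ∈ Finset.range n, a i ω * b i ω * (a' i ω * b' i ω) - m|}) atTop (𝓝 0))
    (ε : ℝ) (hε : 0 < ε) :
    Tendsto (fun n : ℕ => μ.real {ω | ε ≤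
      |(n : ℝ)⁻¹ * ∑ i ∈ Finset.range n, (a i ω - d1 n i ω) * (b i ω - d2 n i ω) *
        ((a' i ω - d3 n i ω) * (b' i ω - d4 n i ω)) - m|}) atTop (𝓝 0) := by
  rw [Metric.tendsto_atTop']
  suffices h : ∀ η : ℝ, 0 < η → ∀ᶠ n : ℕ in atTop, μ.real {ω | ε ≤
      |(n : ℝ)⁻¹ * ∑ i ∈ Finset.range n, (a i ω - d1 n i ω) * (b i ω - d2 n i ω) *
        ((a' i ω - d3 n i ω) * (b' i ω - d4 n i ω)) - m|} ≤ η by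
    intro η hη
    obtain ⟨N, hN⟩ := eventually_atTop.1 (h (η / 2) (by positivity))
    refine ⟨N, fun n hn => ?_⟩
    rw [Real.dist_eq, sub_zero, abs_of_nonneg measureReal_nonneg]
    linarith [hN n hn.le]
  intro η hη
  obtain ⟨R1, hR1⟩ := h1 (η / 5) (by positivity)
  obtain ⟨R2, hR2⟩ := h2 (η / 5) (by positivity)
  obtain ⟨R3, hR3⟩ := h3 (η / 5) (by positivity)
  obtain ⟨R4, hR4⟩ := h4 (η / 5) (by positivity)
  obtain ⟨K, hKC, hK1, hK2, hK3, hK4, hK0⟩ : ∃ K : ℝ, C ≤ K ∧ R1 ≤ K ∧ R2 ≤ K ∧ R3 ≤ K ∧ R4 ≤ K ∧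
      0 < K := by
    refine ⟨|C| + |R1| + |R2| + |R3| + |R4| + 1, ?_⟩
    have := le_abs_self C
    have := le_abs_self R1
    have := le_abs_self R2
    have := le_abs_self R3
    have := le_abs_self R4
    have := abs_nonneg C
    have := abs_nonneg R1
    have := abs_nonneg R2
    have := abs_nonneg R3
    have := abs_nonneg R4
    refine ⟨?_, ?_, ?_, ?_, ?_, ?_⟩ <;> linarith
  set s := ε / (16 * (2 * K) ^ 3) with hs
  have hs0 : 0 < s := by positivity
  have hss : 0 < s ^ 2 := by positivity
  have hL := (hlln (ε / 2) (by positivity)).eventually_lt_const (show (0:ℝ) < η / 5 by positivity)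
  filter_upwards [hR1 _ hss, hR2 _ hss, hR3 _ hss, hR4 _ hss, hL, eventually_gt_atTop 0] with n
    k1 k2 k3 k4 kL hn
  have hn' : (0:ℝ) < n := by exact_mod_cast hn
  refine le_trans (b := μ.real ({ω | (∃ i < n, R1 < |d1 n i ω|) ∨
        s ^ 2 ≤ (n : ℝ)⁻¹ * ∑ i ∈ Finset.range n, d1 n i ω ^ 2} ∪
      ({ω | (∃ i < n, R2 < |d2 n i ω|) ∨
        s ^ 2 ≤ (n : ℝ)⁻¹ * ∑ i ∈ Finset.range n, d2 n i ω ^ 2} ∪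
      ({ω | (∃ i < n, R3 < |d3 n i ω|) ∨
        s ^ 2 ≤ (n : ℝ)⁻¹ * ∑ i ∈ Finset.range n, d3 n i ω ^ 2} ∪
      ({ω | (∃ i < n, R4 < |d4 n i ω|) ∨
        s ^ 2 ≤ (n : ℝ)⁻¹ * ∑ i ∈ Finset.range n, d4 n i ω ^ 2} ∪ {ω | ε / 2 ≤
      |(n : ℝ)⁻¹ * ∑ i ∈ Finset.range n, a i ω * b i ω * (a' i ω * b' i ω) - m|}))))) ?_ ?_
  swap
  · refine (measureReal_union_le _ _).trans ?_
    refine (add_le_add k1 ((measureReal_union_le _ _).trans (add_le_add k2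
      ((measureReal_union_le _ _).trans (add_le_add k3 ((measureReal_union_le _ _).trans
        (add_le_add k4 kL.le))))))).trans ?_
    linarith
  refine ENNReal.toReal_mono (measure_ne_top _ _) (measure_mono_ae ?_)
  filter_upwards [ha, hb, ha', hb'] with ω ha hb ha' hb'
  intro hmem
  by_contra hcon
  have c1 := fun h => hcon (Or.inl h)
  have c2 := fun h => hcon (Or.inr (Or.inl h))
  have c3 := fun h => hcon (Or.inr (Or.inr (Or.inl h)))
  have c4 := fun h => hcon (Or.inr (Or.inr (Or.inr (Or.inl h))))
  have c5 := fun h => hcon (Or.inr (Or.inr (Or.inr (Or.inr h))))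
  have aux : ∀ (R : ℝ) (d : ℕ → ℝ), R ≤ K → ¬ ((∃ i < n, R < |d i|) ∨
        s ^ 2 ≤ (n : ℝ)⁻¹ * ∑ i ∈ Finset.range n, d i ^ 2) →
      (∀ i ∈ Finset.range n, |d i| ≤ K) ∧ (n : ℝ)⁻¹ * ∑ i ∈ Finset.range n, |d i| ≤ s := by
    intro R d hRK hd
    push Not at hd
    exact ⟨fun i hi => (hd.1 i (Finset.mem_range.1 hi)).trans hRK, mean_abs d hs0 hn hd.2⟩
  obtain ⟨b1, m1⟩ := aux R1 (fun i => d1 n i ω) hK1 c1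
  obtain ⟨b2, m2⟩ := aux R2 (fun i => d2 n i ω) hK2 c2
  obtain ⟨b3, m3⟩ := aux R3 (fun i => d3 n i ω) hK3 c3
  obtain ⟨b4, m4⟩ := aux R4 (fun i => d4 n i ω) hK4 c4
  have c5' : |(n : ℝ)⁻¹ * ∑ i ∈ Finset.range n, a i ω * b i ω * (a' i ω * b' i ω) - m| < ε / 2 :=
    not_le.1 c5
  have hdiff : |(n : ℝ)⁻¹ * ∑ i ∈ Finset.range n, (a i ω - d1 n i ω) * (b i ω - d2 n i ω) *
        ((a' i ω - d3 n i ω) * (b' i ω - d4 n i ω)) -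
      (n : ℝ)⁻¹ * ∑ i ∈ Finset.range n, a i ω * b i ω * (a' i ω * b' i ω)| ≤
      (2 * K) ^ 3 * (s + s + s + s) := by
    rw [← mul_sub, ← Finset.sum_sub_distrib, abs_mul, abs_of_nonneg (by positivity)]
    calc _ ≤ (n : ℝ)⁻¹ * ∑ i ∈ Finset.range n, (2 * K) ^ 3 *
          (|d1 n i ω| + |d2 n i ω| + |d3 n i ω| + |d4 n i ω|) := by
          gcongr
          refine (Finset.abs_sum_le_sum_abs _ _).trans (Finset.sum_le_sum fun i hi => ?_)
          exact prod_diff ((ha i).trans hKC) ((hb i).trans hKC) ((ha' i).trans hKC)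
            ((hb' i).trans hKC) (b1 i hi) (b2 i hi) (b3 i hi) (b4 i hi)
      _ = (2 * K) ^ 3 * ((n : ℝ)⁻¹ * ∑ i ∈ Finset.range n, |d1 n i ω| +
          (n : ℝ)⁻¹ * ∑ i ∈ Finset.range n, |d2 n i ω| +
          (n : ℝ)⁻¹ * ∑ i ∈ Finset.range n, |d3 n i ω| +
          (n : ℝ)⁻¹ * ∑ i ∈ Finset.range n, |d4 n i ω|) := by
          rw [← Finset.mul_sum]
          simp only [Finset.sum_add_distrib]
          ring
      _ ≤ _ := by gcongr
  have hval : (2 * K) ^ 3 * (s + s + s + s) = ε / 4 := by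
    rw [hs]; field_simp; norm_num
  rw [hval] at hdiff
  have hmem' : ε ≤ |(n : ℝ)⁻¹ * ∑ i ∈ Finset.range n, (a i ω - d1 n i ω) * (b i ω - d2 n i ω) *
        ((a' i ω - d3 n i ω) * (b' i ω - d4 n i ω)) - m| := hmem
  have htri := abs_sub_le ((n : ℝ)⁻¹ * ∑ i ∈ Finset.range n, (a i ω - d1 n i ω) * (b i ω - d2 n i ω) *
        ((a' i ω - d3 n i ω) * (b' i ω - d4 n i ω)))
        ((n : ℝ)⁻¹ * ∑ i ∈ Finset.range n, a i ω * b i ω * (a' i ω * b' i ω)) m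
  linarith

theorem lln {W : Type} [MeasurableSpace W] (S : ℕ → Ω → W) (hS : ∀ i, Measurable (S i))
    (hind : iIndepFun S μ) (hlaw : ∀ i, μ.map (S i) = μ.map (S 0)) (g : W → ℝ)
    (hg : Measurable g) (C : ℝ) (hgC : ∀ᵐ ω ∂μ, |g (S 0 ω)| ≤ C) (ε : ℝ) (hε : 0 < ε) :
    Tendsto (fun n : ℕ => μ.real {ω | ε ≤
      |(n : ℝ)⁻¹ * ∑ i ∈ Finset.range n, g (S i ω) - ∫ ω, g (S 0 ω) ∂μ|}) atTop (𝓝 0) := by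
  have hInteg : Integrable (fun ω => g (S 0 ω)) μ :=
    Integrable.of_bound (hg.comp (hS 0)).aestronglyMeasurable C hgC
  have h := strong_law_ae_real (μ := μ) (fun i ω => g (S i ω)) hInteg
    (fun i j hij => (hind.indepFun hij).comp hg hg)
    (fun i => (IdentDistrib.mk (hS i).aemeasurable (hS 0).aemeasurable (hlaw i)).comp hg)
  have h2 := tendstoInMeasure_of_tendsto_ae (μ := μ)
    (f := fun (n : ℕ) ω => (n : ℝ)⁻¹ * ∑ i ∈ Finset.range n, g (S i ω))
    (g := fun _ => ∫ ω, g (S 0 ω) ∂μ) (fun n => by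
      refine Measurable.aestronglyMeasurable ?_
      exact (Finset.measurable_sum _ fun i _ => hg.comp (hS i)).const_mul _) (by
      filter_upwards [h] with ω hω
      refine hω.congr fun n => ?_
      rw [div_eq_inv_mul])
  have h3 := (tendstoInMeasure_iff_norm.1 h2) ε hε
  simp only [Real.norm_eq_abs] at h3
  have h4 := (ENNReal.tendsto_toReal ENNReal.zero_ne_top).comp h3
  exact h4
end Comb

section Full
variable {D : Type} [TopologicalSpace D] [SecondCountableTopology D] [MeasurableSpace D]
  [BorelSpace D] {ν : Measure D} [IsProbabilityMeasure ν]
  {Ω : Type} [MeasurableSpace Ω] {μ : Measure Ω} [IsProbabilityMeasure μ]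

theorem reg_full (k : D → D → ℝ) (hkb : BoundedKernel k)
    (hkc : Continuous fun q : D × D => k q.1 q.2) (hks : ∀ z z', k z z' = k z' z)
    (hkp : PosDefKernel k)
    (L : Lp ℝ 2 ν →L[ℝ] Lp ℝ 2 ν)
    (hL : ∀ g : Lp ℝ 2 ν, (L g : D → ℝ) =ᵐ[ν] fun z => ∫ z', k z z' * g z' ∂ν)
    (Q γ : ℝ) (hγ0 : 0 ≤ γ) (hA2 : TraceAssumption ν L Q γ)
    (β : ℝ) (hβ1 : 1 < β) (P : Lp ℝ 2 ν →L[ℝ] Lp ℝ 2 ν)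
    (hP : IsFracPower L (β / 2) P) (f : D → ℝ) (hf : MemLp f 2 ν)
    (hfr : hf.toLp f ∈ Set.range ⇑P)
    {W : Type} [MeasurableSpace W] (S : ℕ → Ω → W) (hS : ∀ i, Measurable (S i))
    (hind : iIndepFun S μ) (π : W → D) (hπ : Measurable π)
    (hlaw : ∀ i, μ.map (fun ω => π (S i ω)) = ν)
    (φ : W → ℝ) (hφ : Measurable φ) (C : ℝ) (hφC : ∀ w, |φ w| ≤ C)
    (horth : ∀ i, ∀ ψ : D → ℝ, Measurable ψ → (∃ K, ∀ z, |ψ z| ≤ K) →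
      ∫ w, (φ w - f (π w)) * ψ (π w) ∂(μ.map (S i)) = 0)
    (rn : ℕ → ℕ) (hrn : ∀ n, rn n ≤ n) (hrt : Tendsto rn atTop atTop) :
    (∃ C', ∀ᵐ ω ∂μ, ∀ i, |φ (S i ω) - f (π (S i ω))| ≤ C') ∧
    Small μ fun n i ω => rls k (fun l => π (S l ω)) (fun l => φ (S l ω)) (rn n)
          ((rn n : ℝ) ^ (-(1 / (1 + γ)))) (π (S i ω)) - f (π (S i ω)) := by
  obtain ⟨H, i1, i2, i3, Φ, hΦ⟩ := exists_feature k hks hkp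
  have hΦc : Continuous Φ := continuous_feature Φ k hΦ hkc
  obtain ⟨B, hB⟩ := hkb
  have hM : ∀ z, ‖Φ z‖ ≤ √B := fun z => by
    refine Real.le_sqrt_of_sq_le ?_
    rw [← real_inner_self_eq_norm_sq, hΦ]
    exact (le_abs_self _).trans (hB z z)
  obtain ⟨⟨Cf, hCf⟩, h⟩ := regression hΦc hM hΦ L hL Q γ hγ0 hA2 β hβ1 P hP f hf hfr S hS hind π hπ
    hlaw φ hφ C hφC horth rn hrn hrt
  refine ⟨⟨C + Cf, ae_all_iff.2 fun i => ?_⟩, h⟩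
  have h1 : ∀ᵐ ω ∂μ, |f (π (S i ω))| ≤ Cf := by
    refine ae_of_ae_map (hπ.comp (hS i)).aemeasurable (p := fun z => |f z| ≤ Cf) ?_
    have := hlaw i
    simp only [Function.comp_def]
    rw [this]; exact hCf
  filter_upwards [h1] with ω hω
  exact (abs_sub _ _).trans (add_le_add (hφC _) hω)
end Full

end CIProof

/-- `Σ_{n,r_n} → Σ` in probability under `H₀`. -/
theorem statement_17
    (dx dy dz : ℕ) (hdx : 1 ≤ dx) (hdy : 1 ≤ dy) (hdz : 1 ≤ dz)
    {Ω : Type} [MeasurableSpace Ω] [StandardBorelSpace Ω] [Nonempty Ω]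
    (μ : Measure Ω) [IsProbabilityMeasure μ]
    (X : Ω → Fin dx → ℝ) (Z : Ω → Fin dz → ℝ) (Y : Ω → Fin dy → ℝ)
    (hX : Measurable X) (hZ : Measurable Z) (hY : Measurable Y)
    (J : ℕ) (hJ : 1 ≤ J)
    (kX : ((Fin dx → ℝ) × (Fin dz → ℝ)) → ((Fin dx → ℝ) × (Fin dz → ℝ)) → ℝ) (kY : (Fin dy → ℝ) → (Fin dy → ℝ) → ℝ)
    (hk : Assumption1 kX kY)
    (e1 : ((Fin dx → ℝ) × (Fin dz → ℝ)) → (Fin dz → ℝ) → ℝ) (e2 : (Fin dy → ℝ) → (Fin dz → ℝ) → ℝ)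
    (he1m : ∀ t1, Measurable (e1 t1)) (he2m : ∀ t2, Measurable (e2 t2))
    (he1 : ∀ t1, (fun ω => e1 t1 (Z ω)) =ᵐ[μ]
      μ[fun ω' => kX t1 (X ω', Z ω') | MeasurableSpace.comap Z inferInstance])
    (he2 : ∀ t2, (fun ω => e2 t2 (Z ω)) =ᵐ[μ]
      μ[fun ω' => kY t2 (Y ω') | MeasurableSpace.comap Z inferInstance])
    (xS : ℕ → Ω → Fin dx → ℝ) (zS : ℕ → Ω → Fin dz → ℝ) (yS : ℕ → Ω → Fin dy → ℝ)
    (hxS : ∀ i, Measurable (xS i)) (hzS : ∀ i, Measurable (zS i)) (hyS : ∀ i, Measurable (yS i))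
    (hiid : iIndepFun (fun i ω => ((xS i ω, zS i ω), yS i ω)) μ)
    (hlaw : ∀ i, μ.map (fun ω => ((xS i ω, zS i ω), yS i ω)) =
      μ.map fun ω => ((X ω, Z ω), Y ω))
    (kZ1 kZ2 : Fin J → (Fin dz → ℝ) → (Fin dz → ℝ) → ℝ)
    (hkZ1bdd : ∀ j, BoundedKernel (kZ1 j)) (hkZ2bdd : ∀ j, BoundedKernel (kZ2 j))
    (hkZ1cont : ∀ j, Continuous fun q : (Fin dz → ℝ) × (Fin dz → ℝ) => kZ1 j q.1 q.2)
    (hkZ2cont : ∀ j, Continuous fun q : (Fin dz → ℝ) × (Fin dz → ℝ) => kZ2 j q.1 q.2)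
    (hkZ1symm : ∀ j z z', kZ1 j z z' = kZ1 j z' z)
    (hkZ2symm : ∀ j z z', kZ2 j z z' = kZ2 j z' z)
    (hkZ1pd : ∀ j, PosDefKernel (kZ1 j)) (hkZ2pd : ∀ j, PosDefKernel (kZ2 j))
    (L1 L2 : Fin J → (Lp ℝ 2 (μ.map Z) →L[ℝ] Lp ℝ 2 (μ.map Z)))
    (hL1 : ∀ (j : Fin J) (g : Lp ℝ 2 (μ.map Z)),
      (L1 j g : (Fin dz → ℝ) → ℝ) =ᵐ[μ.map Z] fun z => ∫ z', kZ1 j z z' * g z' ∂(μ.map Z))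
    (hL2 : ∀ (j : Fin J) (g : Lp ℝ 2 (μ.map Z)),
      (L2 j g : (Fin dz → ℝ) → ℝ) =ᵐ[μ.map Z] fun z => ∫ z', kZ2 j z z' * g z' ∂(μ.map Z))
    (Q γ : ℝ) (hQ : 0 < Q) (hγ0 : 0 ≤ γ) (hγ1 : γ ≤ 1)
    (hA2 : ∀ j, TraceAssumption (μ.map Z) (L1 j) Q γ ∧ TraceAssumption (μ.map Z) (L2 j) Q γ)
    (β : ℝ) (hβ1 : 1 < β) (hβ2 : β ≤ 2)
    (Lβ1 Lβ2 : Fin J → (Lp ℝ 2 (μ.map Z) →L[ℝ] Lp ℝ 2 (μ.map Z)))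
    (hLβ1 : ∀ j, IsFracPower (L1 j) (β / 2) (Lβ1 j))
    (hLβ2 : ∀ j, IsFracPower (L2 j) (β / 2) (Lβ2 j))
    (he1mem : ∀ t1, MemLp (e1 t1) 2 (μ.map Z)) (he2mem : ∀ t2, MemLp (e2 t2) 2 (μ.map Z))
    (hA3r1 : ∀ (j : Fin J) (t1 : ((Fin dx → ℝ) × (Fin dz → ℝ))), MemLp.toLp (e1 t1) (he1mem t1) ∈ Set.range ⇑(Lβ1 j))
    (hA3r2 : ∀ (j : Fin J) (t2 : Fin dy → ℝ), MemLp.toLp (e2 t2) (he2mem t2) ∈ Set.range ⇑(Lβ2 j))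
    (σ0 L0 : ℝ) (hσ0 : 0 < σ0) (hL0 : 0 < L0)
    (hmom1 : ∀ (t1 : ((Fin dx → ℝ) × (Fin dz → ℝ))) (l : ℕ), 2 ≤ l → ∀ᵐ ω ∂μ,
      (μ[fun ω' => |kX t1 (X ω', Z ω') - e1 t1 (Z ω')| ^ l |
        MeasurableSpace.comap Z inferInstance]) ω ≤ (l.factorial : ℝ) * σ0 ^ 2 * L0 ^ (l - 2) / 2)
    (hmom2 : ∀ (t2 : Fin dy → ℝ) (l : ℕ), 2 ≤ l → ∀ᵐ ω ∂μ,
      (μ[fun ω' => |kY t2 (Y ω') - e2 t2 (Z ω')| ^ l |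
        MeasurableSpace.comap Z inferInstance]) ω ≤ (l.factorial : ℝ) * σ0 ^ 2 * L0 ^ (l - 2) / 2)
    (rn : ℕ → ℕ) (hrn : ∀ n, rn n ≤ n)
    (hro : (fun n : ℕ => (n : ℝ) ^ ((β + γ) / (2 * β))) =o[atTop] fun n => (rn n : ℝ))
    (t : Fin J → (((Fin dx → ℝ) × (Fin dz → ℝ)) × (Fin dy → ℝ)))
    (hH0 : CondIndepFun (MeasurableSpace.comap Z inferInstance) hZ.comap_le X Y μ) :
    ∀ ε : ℝ, 0 < ε → ∀ j j' : Fin J,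
      Tendsto (fun n : ℕ => (μ {ω | ε ≤
          |covTilde kX kY kZ1 kZ2 xS zS yS t n (rn n) ((rn n : ℝ) ^ (-(1 / (1 + γ)))) ω j j' - covMat μ kX kY e1 e2 xS zS yS t j j'|}).toReal) atTop (𝓝 0) := by
  have hp0 : 0 < (β + γ) / (2 * β) := by positivity
  have hrt : Tendsto rn atTop atTop := by
    rw [← tendsto_natCast_atTop_iff (R := ℝ)]
    have h1 : Tendsto (fun n : ℕ => (n : ℝ) ^ ((β + γ) / (2 * β))) atTop atTop :=
      (tendsto_rpow_atTop hp0).comp tendsto_natCast_atTop_atTop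
    refine tendsto_atTop_mono' atTop ?_ h1
    filter_upwards [hro.bound one_pos] with n hn
    rw [one_mul, Real.norm_of_nonneg (by positivity), Real.norm_of_nonneg (by positivity)] at hn
    exact hn
  have : Nonempty (Fin dx) := ⟨⟨0, hdx⟩⟩
  obtain ⟨⟨CX, hCX⟩, ⟨CY, hCY⟩⟩ := CIProof.kernel_reg kX kY hk
  have hPZ : IsProbabilityMeasure (μ.map Z) := Measure.isProbabilityMeasure_map hZ.aemeasurable
  set S : ℕ → Ω → ((Fin dx → ℝ) × (Fin dz → ℝ)) × (Fin dy → ℝ) :=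
    fun i ω => ((xS i ω, zS i ω), yS i ω) with hSdef
  have hS : ∀ i, Measurable (S i) := fun i => ((hxS i).prodMk (hzS i)).prodMk (hyS i)
  have hV : Measurable fun ω => ((X ω, Z ω), Y ω) := (hX.prodMk hZ).prodMk hY
  set π : ((Fin dx → ℝ) × (Fin dz → ℝ)) × (Fin dy → ℝ) → (Fin dz → ℝ) := fun w => w.1.2 with hπdef
  have hπ : Measurable π := measurable_snd.comp measurable_fst
  have hlawπ : ∀ i, μ.map (fun ω => π (S i ω)) = μ.map Z := fun i => by
    have h1 := Measure.map_map (μ := μ) hπ (hS i)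
    have h2 := Measure.map_map (μ := μ) hπ hV
    rw [hlaw i, h2] at h1
    exact h1.symm
  have horth : ∀ (φ : ((Fin dx → ℝ) × (Fin dz → ℝ)) × (Fin dy → ℝ) → ℝ) (C : ℝ)
      (f : (Fin dz → ℝ) → ℝ), Measurable φ → (∀ w, |φ w| ≤ C) → Measurable f →
      ((fun ω => f (Z ω)) =ᵐ[μ] μ[fun ω => φ ((X ω, Z ω), Y ω) |
        MeasurableSpace.comap Z inferInstance]) →
      ∀ i, ∀ ψ : (Fin dz → ℝ) → ℝ, Measurable ψ → (∃ K, ∀ z, |ψ z| ≤ K) →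
      ∫ w, (φ w - f (π w)) * ψ (π w) ∂(μ.map (S i)) = 0 := by
    intro φ C f hφ hφC hf hfc i ψ hψ hb
    rw [hlaw i, integral_map hV.aemeasurable]
    · refine CIProof.condExp_orth Z hZ _ ?_ f hfc ψ hψ hb
      exact Integrable.of_bound (hφ.comp hV).aestronglyMeasurable C
        (Eventually.of_forall fun ω => hφC _)
    · exact ((hφ.sub (hf.comp hπ)).mul (hψ.comp hπ)).aestronglyMeasurable
  have hφ1 : ∀ t1, Measurable
      fun w : ((Fin dx → ℝ) × (Fin dz → ℝ)) × (Fin dy → ℝ) => kX t1 w.1 := fun t1 =>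
    (hCX t1).1.measurable.comp measurable_fst
  have hφ2 : ∀ t2, Measurable
      fun w : ((Fin dx → ℝ) × (Fin dz → ℝ)) × (Fin dy → ℝ) => kY t2 w.2 := fun t2 =>
    (hCY t2).1.measurable.comp measurable_snd
  have reg1 := fun j : Fin J => CIProof.reg_full (kZ1 j) (hkZ1bdd j) (hkZ1cont j) (hkZ1symm j)
    (hkZ1pd j) (L1 j) (hL1 j) Q γ hγ0 (hA2 j).1 β hβ1 (Lβ1 j) (hLβ1 j) (e1 (t j).1)
    (he1mem (t j).1) (hA3r1 j (t j).1) S hS hiid π hπ hlawπ (fun w => kX (t j).1 w.1)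
    (hφ1 (t j).1) CX (fun w => (hCX (t j).1).2 w.1)
    (horth (fun w => kX (t j).1 w.1) CX (e1 (t j).1) (hφ1 (t j).1)
      (fun w => (hCX (t j).1).2 w.1) (he1m (t j).1) (he1 (t j).1)) rn hrn hrt
  have reg2 := fun j : Fin J => CIProof.reg_full (kZ2 j) (hkZ2bdd j) (hkZ2cont j) (hkZ2symm j)
    (hkZ2pd j) (L2 j) (hL2 j) Q γ hγ0 (hA2 j).2 β hβ1 (Lβ2 j) (hLβ2 j) (e2 (t j).2)
    (he2mem (t j).2) (hA3r2 j (t j).2) S hS hiid π hπ hlawπ (fun w => kY (t j).2 w.2)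
    (hφ2 (t j).2) CY (fun w => (hCY (t j).2).2 w.2)
    (horth (fun w => kY (t j).2 w.2) CY (e2 (t j).2) (hφ2 (t j).2)
      (fun w => (hCY (t j).2).2 w.2) (he2m (t j).2) (he2 (t j).2)) rn hrn hrt
  intro ε hε j j'
  obtain ⟨⟨C1, hC1⟩, s1⟩ := reg1 j
  obtain ⟨⟨C2, hC2⟩, s2⟩ := reg2 j
  obtain ⟨⟨C3, hC3⟩, s3⟩ := reg1 j'
  obtain ⟨⟨C4, hC4⟩, s4⟩ := reg2 j'
  obtain ⟨C, hc1, hc2, hc3, hc4⟩ : ∃ C : ℝ, C1 ≤ C ∧ C2 ≤ C ∧ C3 ≤ C ∧ C4 ≤ C :=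
    ⟨max (max C1 C2) (max C3 C4), by simp, by simp, by simp, by simp⟩
  replace hC1 := hC1.mono fun ω h i => (h i).trans hc1
  replace hC2 := hC2.mono fun ω h i => (h i).trans hc2
  replace hC3 := hC3.mono fun ω h i => (h i).trans hc3
  replace hC4 := hC4.mono fun ω h i => (h i).trans hc4
  let g : ((Fin dx → ℝ) × (Fin dz → ℝ)) × (Fin dy → ℝ) → ℝ := fun w =>
    (kX (t j).1 w.1 - e1 (t j).1 (π w)) * (kY (t j).2 w.2 - e2 (t j).2 (π w)) *
    ((kX (t j').1 w.1 - e1 (t j').1 (π w)) * (kY (t j').2 w.2 - e2 (t j').2 (π w)))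
  have hg : Measurable g := by
    have a1 := fun j : Fin J => (hφ1 (t j).1).sub ((he1m (t j).1).comp hπ)
    have a2 := fun j : Fin J => (hφ2 (t j).2).sub ((he2m (t j).2).comp hπ)
    exact ((a1 j).mul (a2 j)).mul ((a1 j').mul (a2 j'))
  have hlln := CIProof.lln S hS hiid (fun i => (hlaw i).trans (hlaw 0).symm) g hg
    (C * C * (C * C)) (by
      filter_upwards [hC1, hC2, hC3, hC4] with ω h1 h2 h3 h4
      have hC0 : 0 ≤ C := (abs_nonneg _).trans (h1 0)
      simp only [g, abs_mul]
      exact mul_le_mul (mul_le_mul (h1 0) (h2 0) (abs_nonneg _) hC0)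
        (mul_le_mul (h3 0) (h4 0) (abs_nonneg _) hC0) (by positivity) (by positivity))
  have hfin := CIProof.combine (μ := μ) _ _ _ _ _ _ _ _ C hC1 hC2 hC3 hC4 s1 s2 s3 s4 _ hlln ε hε
  refine hfin.congr fun n => ?_
  change (μ _).toReal = (μ _).toReal
  congr 2
  ext ω
  simp only [covTilde, covMat, uTildeStat, uStat, Matrix.of_apply, sub_sub_sub_cancel_right]
  rfl
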